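/- For every ε > 0 and every finite set J, there exist δ > 0 and T > 0 such that the following holds. Let V = (J, (V_j)_{j∈J}, r, H) be a hypergraph system and let g be a weighted hypergraph on V satisfying 0 ≤ g_e(x_e) ≤ 1 for all e ∈ H and x_e ∈ V_e, and E[∏_{e∈H} g_e(x_e) | x ∈ V_J] ≤ δ. Then for each e ∈ H there exists a set E'_e ⊆ V_e such that V_e ∖ E'_e has complexity at most T, ∏_{e∈H} 1_{E'_e}(x_e) = 0 for all x ∈ V_J, and E[g_e(x_e)·1_{V_e∖E'_e}(x_e) | x_e ∈ V_e] ≤ ε for all e ∈ H. -/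

import Mathlib

/-!
The theorem is proved by contradiction and compactness. If it failed for `ε` and a fixed edge set
`H`, there would be weighted hypergraphs `g n` on vertex systems `W n` whose `H`-counts tend to zero
but for which there is no removal of error `ε` and complexity `n + 1`. Their ultraproduct along a
nonprincipal ultrafilter carries a Loeb measure `μ` (`exists_loeb`), the extension of the limiting
counting density of internal sets, and the threshold sets `{g n e ≥ ε / 2}` become sets
`S e` with `⋂ e ∈ H, S e` null.

For a family `F` of subsets of `J`, let `sig W F` be the σ-algebra generated by the internal sets
that depend only on the coordinates in some `f ∈ F`, and `alg W F` the Boolean algebra they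
generate. The structural input is conditional independence (`ci`): given the traces `f ∩ e`,
`f ∈ F`, an `e`-measurable set is independent of `sig W F`. It holds because an average over all of
`V_J` is dominated by an average over a slice with the coordinates outside `e` frozen
(`exists_slice`). Consequently (`peel`) the sets `S e`, with `|e| = k + 1`, may be replaced by the
supports of their conditional probabilities given the information of order `k`, which contain the
`S e` up to null sets and still have null intersection.

It remains to treat sets `E e` of order `k` inside `e` with null intersection. They are covered, up
to small measure, by sets `F e ∈ alg W (low e k)` with empty intersection (`removal_limit`), by
induction on `k`. In the step to `k + 1`, approximate `E e` by a Boolean combination of generators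
and cut the space into the cells of the generators of order exactly `k + 1`. For each system of
cells, the points at which the cell is, conditionally on order `k`, almost contained in `E e`
form sets of order `k` with null intersection (`null_core`), so the induction hypothesis applies
to them, whereas the remaining part of the cells has small measure (`off_core`).

Finally, an element of `alg W (low e k)` is internal, given at each level `n` by a fixed Boolean
combination of sets depending on fewer than `|e|` coordinates of `e`; such a combination has
complexity bounded independently of `n` (`complexityLE_bool`). Emptiness of an internal set and
a strict bound on its measure both hold at almost every level `n` (`transfer`), a contradiction.
-/

open Finset

/-- The average (expectation with respect to the uniform measure) of `f` over `α`. -/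
noncomputable def avg {α : Type*} [Fintype α] (f : α → ℝ) : ℝ :=
  (∑ x, f x) / (Fintype.card α)

variable {J : Type} [Fintype J] [DecidableEq J] {V : J → Type}

/-- Restriction (projection) of a full tuple `x ∈ V_J` to the coordinates in `e`. -/
def restr (e : Finset J) (x : (j : J) → V j) : (i : ↥e) → V i := fun i => x i.1

/-- Projection of a tuple indexed by `e` to the coordinates in the face `e.erase j`. -/
def faceProj {e : Finset J} (j : J) (x : (i : ↥e) → V i) :
    (i : ↥(e.erase j)) → V i :=
  fun i => x ⟨i.1, Finset.mem_of_mem_erase i.2⟩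

/-- The product `∏_{f ∈ ∂e} 1_{B_f}(x_f)` of the indicators of the sets `B_f ⊆ V_f`
over the faces `f = e.erase j`, `j ∈ e`, of `e`. -/
noncomputable def faceInd (e : Finset J)
    (B : (j : J) → Set ((i : ↥(e.erase j)) → V i)) (x : (i : ↥e) → V i) : ℝ :=
  ∏ j ∈ e, Set.indicator (B j) (fun _ => (1 : ℝ)) (faceProj j x)

/-- `(g, g')` is an `ε`-discrepancy pair on the edge `e`: for all choices of
`B_f ⊆ V_f` (`f ∈ ∂e`), `|E[(g(x_e) - g'(x_e)) ∏_{f ∈ ∂e} 1_{B_f}(x_f)]| ≤ ε`. -/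
noncomputable def EdgeDiscrepancy [∀ j, Fintype (V j)] (e : Finset J)
    (g g' : ((i : ↥e) → V i) → ℝ) (ε : ℝ) : Prop :=
  ∀ B : (j : J) → Set ((i : ↥(e.erase j)) → V i),
    |avg (fun x : (i : ↥e) → V i => (g x - g' x) * faceInd e B x)| ≤ ε

/-- `g` is upper `η`-regular on the edge `e`: for all choices of `B_f ⊆ V_f`
(`f ∈ ∂e`), `E[(g(x_e) - 1) ∏_{f ∈ ∂e} 1_{B_f}(x_f)] ≤ η`. -/
noncomputable def EdgeUpperRegular [∀ j, Fintype (V j)] (e : Finset J)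
    (g : ((i : ↥e) → V i) → ℝ) (η : ℝ) : Prop :=
  ∀ B : (j : J) → Set ((i : ↥(e.erase j)) → V i),
    avg (fun x : (i : ↥e) → V i => (g x - 1) * faceInd e B x) ≤ η

/-- `E ⊆ V_e` is the set of `r`-cliques of some `(r-1)`-uniform hypergraph: there are
sets `B_f ⊆ V_f` for the faces `f ∈ ∂e` with `1_E(x_e) = ∏_{f ∈ ∂e} 1_{B_f}(x_f)`. -/
def IsCliqueSet (e : Finset J) (E : Set ((i : ↥e) → V i)) : Prop :=
  ∃ B : (j : J) → Set ((i : ↥(e.erase j)) → V i),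
    ∀ x, x ∈ E ↔ ∀ j ∈ e, faceProj j x ∈ B j

/-- `E ⊆ V_e` has complexity at most `T`: it can be partitioned into `T` (possibly
empty) clique sets. -/
def ComplexityLE (e : Finset J) (E : Set ((i : ↥e) → V i)) (T : ℕ) : Prop :=
  ∃ P : Fin T → Set ((i : ↥e) → V i),
    (∀ i, IsCliqueSet e (P i)) ∧
    (∀ i₁ i₂, i₁ ≠ i₂ → P i₁ ∩ P i₂ = ∅) ∧
    (⋃ i, P i) = E

/-- The weighted hypergraph `ν` satisfies the `H`-linear forms condition within `η`:
for every choice of exponents `n (e, ω) ∈ {0,1}` (`e ∈ H`, `ω ∈ {0,1}^e`),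
`|E[∏_{e ∈ H} ∏_{ω ∈ {0,1}^e} ν_e(x_e^{(ω)})^{n_{e,ω}} | x⁰, x¹ ∈ V_J] - 1| ≤ η`. -/
noncomputable def HLinearForms [∀ j, Fintype (V j)] (H : Finset (Finset J))
    (ν : (e : Finset J) → ((i : ↥e) → V i) → ℝ) (η : ℝ) : Prop :=
  ∀ n : (e : Finset J) → (↥e → Bool) → Bool,
    |avg (fun x : ((j : J) → V j) × ((j : J) → V j) =>
      ∏ e ∈ H, ∏ ω : ↥e → Bool,
        if n e ω then ν e (fun i => if ω i then x.2 i.1 else x.1 i.1) else 1) - 1| ≤ η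

namespace HyperRemoval

open MeasureTheory Filter Topology ENNReal

/-! ### The ultraproduct and its Loeb measure -/

section Loeb

variable {X : ℕ → Type}

/-- The sample space of the limit object: sequences of points, one in each `X n`. Instead of
passing to the quotient by equality along the ultrafilter, only sets invariant under that
equivalence are ever considered. -/
def Ult (X : ℕ → Type) : Type := ∀ n, X n

/-- The internal set attached to a sequence of sets `A n ⊆ X n`: the sequences lying in `A n` for
almost every `n`, with respect to a fixed nonprincipal ultrafilter on `ℕ`. -/
def IntSet (A : ∀ n, Set (X n)) : Set (Ult X) :=
  {ω | ∀ᶠ n in (hyperfilter ℕ : Filter ℕ), ω n ∈ A n}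

instance : MeasurableSpace (Ult X) := MeasurableSpace.generateFrom (Set.range (IntSet (X := X)))

/-- Finite Boolean combinations commute with the formation of internal sets. -/
lemma intSet_bool {I : Type} [Finite I] (S : I → ∀ n, Set (X n)) (Φ : (I → Prop) → Prop) :
    {ω : Ult X | Φ (fun i => ω ∈ IntSet (S i))}
      = IntSet (fun n => {x | Φ (fun i => x ∈ S i n)}) := by
  ext ω
  have h1 : ∀ i, ∀ᶠ n in (hyperfilter ℕ : Filter ℕ),
      ((ω n ∈ S i n) = (ω ∈ IntSet (S i))) := by
    intro i
    by_cases h : ω ∈ IntSet (S i)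
    · filter_upwards [h] with n hn
      simp [hn, h]
    · have h' : ∀ᶠ n in (hyperfilter ℕ : Filter ℕ), ¬ ω n ∈ S i n :=
        Ultrafilter.eventually_not.2 h
      filter_upwards [h'] with n hn
      simp [hn, h]
  have h2 := Filter.eventually_all.2 h1
  have h3 : ∀ᶠ n in (hyperfilter ℕ : Filter ℕ),
      (Φ (fun i => ω n ∈ S i n) ↔ Φ (fun i => ω ∈ IntSet (S i))) := by
    filter_upwards [h2] with n hn
    rw [funext hn]
  constructor
  · intro h
    filter_upwards [h3] with n hn
    exact hn.2 h
  · intro h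
    obtain ⟨n, hn, hn'⟩ := (h3.and h).exists
    exact hn.1 hn'

lemma intSet_compl (A : ∀ n, Set (X n)) : (IntSet A)ᶜ = IntSet (fun n => (A n)ᶜ) :=
  intSet_bool (I := Unit) (fun _ => A) (fun p => ¬ p ())

lemma intSet_union (A B : ∀ n, Set (X n)) : IntSet A ∪ IntSet B = IntSet (fun n => A n ∪ B n) :=
  intSet_bool (I := Bool) (fun b => cond b A B) (fun p => p true ∨ p false)

lemma intSet_inter (A B : ∀ n, Set (X n)) : IntSet A ∩ IntSet B = IntSet (fun n => A n ∩ B n) :=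
  intSet_bool (I := Bool) (fun b => cond b A B) (fun p => p true ∧ p false)

lemma intSet_empty : IntSet (fun n => (∅ : Set (X n))) = ∅ :=
  (intSet_bool (I := Empty) (fun i => i.elim) (fun _ => False)).symm

lemma intSet_univ : IntSet (fun n => (Set.univ : Set (X n))) = Set.univ :=
  (intSet_bool (I := Empty) (fun i => i.elim) (fun _ => True)).symm

lemma measurableSet_intSet (A : ∀ n, Set (X n)) : MeasurableSet (IntSet A) :=
  MeasurableSpace.measurableSet_generateFrom ⟨A, rfl⟩

lemma intSet_eq_empty [∀ n, Nonempty (X n)] {A : ∀ n, Set (X n)} (h : IntSet A = ∅) :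
    ∀ᶠ n in (hyperfilter ℕ : Filter ℕ), A n = ∅ := by
  classical
  by_contra hc
  have hc' : ∀ᶠ n in (hyperfilter ℕ : Filter ℕ), ¬ A n = ∅ := Ultrafilter.eventually_not.2 hc
  let ω : Ult X := fun n => if hn : (A n).Nonempty then hn.some else Classical.arbitrary _
  have : ω ∈ IntSet A := by
    filter_upwards [hc'] with n hn
    have hn' := Set.nonempty_iff_ne_empty.2 hn
    simp only [ω, dif_pos hn']
    exact hn'.some_mem
  rw [h] at this
  exact this

/-- Countable saturation: a countable cover of an internal set by internal sets has a finite
subcover. -/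
lemma intSet_compact [∀ n, Nonempty (X n)] (B : ∀ n, Set (X n)) (A : ℕ → ∀ n, Set (X n))
    (h : IntSet B ⊆ ⋃ i, IntSet (A i)) : ∃ N, IntSet B ⊆ ⋃ i ∈ Finset.range N, IntSet (A i) := by
  classical
  by_contra hc
  push Not at hc
  let P : ℕ → ℕ → Prop := fun N n => ∃ x, x ∈ B n ∧ ∀ i < N, x ∉ A i n
  have hP : ∀ N, ∀ᶠ n in (hyperfilter ℕ : Filter ℕ), P N n := by
    intro N
    obtain ⟨ω, hω, hω'⟩ := Set.not_subset.1 (hc N)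
    have h1 : ∀ i : Fin N, ∀ᶠ n in (hyperfilter ℕ : Filter ℕ), ω n ∉ A i n := by
      intro i
      refine Ultrafilter.eventually_not.2 fun hi => hω' ?_
      simp only [Set.mem_iUnion, Finset.mem_range]
      exact ⟨i, i.2, hi⟩
    filter_upwards [Filter.eventually_all.2 h1, hω] with n hn hn'
    exact ⟨ω n, hn', fun i hi => hn ⟨i, hi⟩⟩
  -- the diagonal sequence avoids `A i n` for as many `i ≤ n` as possible
  let ω : Ult X := fun n => if hn : P (Nat.findGreatest (fun N => P N n) n) n then hn.choose
    else Classical.arbitrary _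
  have hω : ∀ N, ∀ᶠ n in (hyperfilter ℕ : Filter ℕ), ω n ∈ B n ∧ ∀ i < N, ω n ∉ A i n := by
    intro N
    have hN : ∀ᶠ n in (hyperfilter ℕ : Filter ℕ), N ≤ n := by
      have : ∀ᶠ n in (atTop : Filter ℕ), N ≤ n := eventually_ge_atTop N
      rw [← Nat.cofinite_eq_atTop] at this
      exact Filter.hyperfilter_le_cofinite this
    filter_upwards [hP N, hN] with n h1 h2
    have h3 : P (Nat.findGreatest (fun N => P N n) n) n :=
      Nat.findGreatest_spec (P := fun N => P N n) h2 h1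
    have h4 : N ≤ Nat.findGreatest (fun N => P N n) n := Nat.le_findGreatest h2 h1
    simp only [ω, dif_pos h3]
    exact ⟨h3.choose_spec.1, fun i hi => h3.choose_spec.2 i (hi.trans_le h4)⟩
  have hB : ω ∈ IntSet B := by
    filter_upwards [hω 0] with n hn
    exact hn.1
  obtain ⟨i, hi⟩ := Set.mem_iUnion.1 (h hB)
  obtain ⟨n, hn, hn'⟩ := (Filter.Eventually.and hi (hω (i + 1))).exists
  exact hn'.2 i (Nat.lt_succ_self i) hn

/-- The normalised counting measure of `A n`, as a sequence in `n`. -/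
noncomputable def dens (A : ∀ n, Set (X n)) (n : ℕ) : ℝ≥0∞ := (A n).ncard / Nat.card (X n)

/-- The limit of the densities along the ultrafilter. -/
noncomputable def limDens (A : ∀ n, Set (X n)) : ℝ≥0∞ :=
  ((hyperfilter ℕ).map (dens A)).lim

lemma tendsto_limDens (A : ∀ n, Set (X n)) :
    Tendsto (dens A) (hyperfilter ℕ : Filter ℕ) (𝓝 (limDens A)) :=
  Ultrafilter.le_nhds_lim _

lemma limDens_eq {A : ∀ n, Set (X n)} {l : ℝ≥0∞}
    (h : Tendsto (dens A) (hyperfilter ℕ : Filter ℕ) (𝓝 l)) : limDens A = l :=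
  tendsto_nhds_unique (tendsto_limDens A) h

open Classical in
/-- The finitely additive function on internal sets given by the limit of the densities. -/
noncomputable def contFun (s : Set (Ult X)) : ℝ≥0∞ :=
  if h : ∃ A, IntSet A = s then limDens h.choose else 0

lemma contFun_intSet [∀ n, Nonempty (X n)] (A : ∀ n, Set (X n)) :
    contFun (IntSet A) = limDens A := by
  have h : ∃ B, IntSet B = IntSet A := ⟨A, rfl⟩
  rw [contFun, dif_pos h]
  apply limDens_eq
  refine (tendsto_limDens A).congr' ?_
  have h1 : IntSet (fun n => symmDiff (A n) (h.choose n)) = ∅ := by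
    have := intSet_bool (I := Bool) (fun b => cond b A h.choose)
      (fun p => (p true ∧ ¬ p false) ∨ (p false ∧ ¬ p true))
    refine Eq.trans this.symm ?_
    ext ω
    simp [h.choose_spec]
  filter_upwards [intSet_eq_empty h1] with n hn
  have : A n = h.choose n := symmDiff_eq_bot.1 hn
  simp only [dens, this]

lemma isSetAlgebra_intSet : IsSetAlgebra (Set.range (IntSet (X := X))) where
  empty_mem := ⟨_, intSet_empty⟩
  compl_mem := by
    rintro _ ⟨A, rfl⟩
    exact ⟨_, (intSet_compl A).symm⟩
  union_mem := by
    rintro _ _ ⟨A, rfl⟩ ⟨B, rfl⟩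
    exact ⟨_, (intSet_union A B).symm⟩

/-- Existence of the Loeb measure: a probability measure giving each internal set the limit of
its densities. -/
theorem exists_loeb (X : ℕ → Type) [∀ n, Finite (X n)] [∀ n, Nonempty (X n)] :
    ∃ μ : Measure (Ult X), IsProbabilityMeasure μ ∧ ∀ A : ∀ n, Set (X n),
      Tendsto (fun n => ((A n).ncard : ℝ) / Nat.card (X n)) (hyperfilter ℕ : Filter ℕ)
        (𝓝 (μ.real (IntSet A))) := by
  classical
  have hring := (isSetAlgebra_intSet (X := X)).isSetRing
  have hcard : ∀ n, (Nat.card (X n) : ℝ≥0∞) ≠ 0 := fun n => by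
    exact_mod_cast (Nat.card_pos (α := X n)).ne'
  let m : AddContent ℝ≥0∞ (Set.range (IntSet (X := X))) :=
    hring.addContent_of_union contFun (by
      rw [← intSet_empty, contFun_intSet]
      apply limDens_eq
      exact tendsto_const_nhds.congr fun n => by simp [dens]) (by
      rintro _ _ ⟨A, rfl⟩ ⟨B, rfl⟩ hd
      rw [intSet_union, contFun_intSet, contFun_intSet, contFun_intSet]
      apply limDens_eq
      refine ((tendsto_limDens A).add (tendsto_limDens B)).congr' ?_
      rw [Set.disjoint_iff_inter_eq_empty, intSet_inter] at hd
      filter_upwards [intSet_eq_empty hd] with n hn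
      simp only [dens]
      rw [Set.ncard_union_eq (Set.disjoint_iff_inter_eq_empty.2 hn) (Set.toFinite _)
        (Set.toFinite _), Nat.cast_add, ENNReal.add_div])
  have hm : ∀ A, m (IntSet A) = limDens A := fun A => contFun_intSet A
  have hsub : m.IsSigmaSubadditive := by
    intro f hf hU
    choose A hA using hf
    obtain ⟨B, hB⟩ := hU
    obtain rfl : (fun i => IntSet (A i)) = f := funext hA
    obtain ⟨N, hN⟩ := intSet_compact B A hB.subset
    have h1 : (⋃ i, IntSet (A i)) = ⋃ i ∈ Finset.range N, IntSet (A i) := by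
      apply Set.Subset.antisymm
      · rw [← hB]; exact hN
      · exact Set.iUnion₂_subset fun i _ => Set.subset_iUnion (fun i => IntSet (A i)) i
    rw [h1]
    refine (addContent_biUnion_le hring (fun i _ => ⟨A i, rfl⟩)).trans ?_
    exact ENNReal.sum_le_tsum _
  let μ := m.measure hring.isSetSemiring le_rfl hsub
  have hμ : ∀ A, μ (IntSet A) = limDens A := fun A => by
    rw [← hm A]
    exact m.measure_eq hring.isSetSemiring rfl hsub ⟨A, rfl⟩
  have hprob : IsProbabilityMeasure μ := by
    constructor
    rw [← intSet_univ, hμ]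
    apply limDens_eq
    have : ∀ n, dens (fun n => (Set.univ : Set (X n))) n = 1 := by
      intro n
      simp only [dens, Set.ncard_univ]
      exact ENNReal.div_self (hcard n) (ENNReal.natCast_ne_top _)
    simp only [funext this]
    exact tendsto_const_nhds
  refine ⟨μ, hprob, fun A => ?_⟩
  have h1 := tendsto_limDens A
  rw [← hμ] at h1
  have h2 := (ENNReal.tendsto_toReal (measure_ne_top μ (IntSet A))).comp h1
  refine h2.congr fun n => ?_
  simp [dens, ENNReal.toReal_div]

end Loeb

/-! ### The σ-algebras of low-order information -/

section Sigma

set_option linter.unusedSectionVars false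

variable {W : ℕ → J → Type}

/-- The limit space of a sequence of vertex systems `(W n j)_{j ∈ J}`. -/
abbrev Om (W : ℕ → J → Type) : Type := Ult (fun n => (j : J) → W n j)

/-- The sets `A n` are determined by the coordinates in `f`. -/
def Dep (f : Finset J) (A : ∀ n, Set ((j : J) → W n j)) : Prop :=
  ∀ n x y, (∀ j ∈ f, x j = y j) → x ∈ A n → y ∈ A n

/-- The internal sets determined by the coordinates in some member of `F`. -/
def gens (W : ℕ → J → Type) (F : Set (Finset J)) : Set (Set (Om W)) :=
  {s | ∃ f ∈ F, ∃ A, Dep f A ∧ IntSet A = s}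

/-- The Boolean algebra generated by the internal `f`-sets, `f ∈ F`. -/
def alg (W : ℕ → J → Type) (F : Set (Finset J)) : Set (Set (Om W)) :=
  generateSetAlgebra (gens W F)

/-- The σ-algebra generated by the internal `f`-sets, `f ∈ F`. -/
@[reducible] def sig (W : ℕ → J → Type) (F : Set (Finset J)) : MeasurableSpace (Om W) :=
  MeasurableSpace.generateFrom (gens W F)

lemma isSetAlgebra_alg (F : Set (Finset J)) : IsSetAlgebra (alg W F) :=
  isSetAlgebra_generateSetAlgebra

lemma sig_eq (F : Set (Finset J)) : sig W F = MeasurableSpace.generateFrom (alg W F) :=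
  generateFrom_generateSetAlgebra_eq.symm

lemma measurableSet_of_alg {F : Set (Finset J)} {s : Set (Om W)} (hs : s ∈ alg W F) :
    MeasurableSet[sig W F] s := by
  rw [sig_eq]
  exact MeasurableSpace.measurableSet_generateFrom hs

lemma gens_mono {F G : Set (Finset J)} (h : ∀ f ∈ F, ∃ g ∈ G, f ⊆ g) : gens W F ⊆ gens W G := by
  rintro _ ⟨f, hf, A, hA, rfl⟩
  obtain ⟨g, hg, hfg⟩ := h f hf
  exact ⟨g, hg, A, fun n x y hxy => hA n x y fun j hj => hxy j (hfg hj), rfl⟩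

lemma sig_mono {F G : Set (Finset J)} (h : ∀ f ∈ F, ∃ g ∈ G, f ⊆ g) : sig W F ≤ sig W G :=
  MeasurableSpace.generateFrom_mono (gens_mono h)

lemma alg_mono {F G : Set (Finset J)} (h : ∀ f ∈ F, ∃ g ∈ G, f ⊆ g) : alg W F ⊆ alg W G :=
  generateSetAlgebra_mono (gens_mono h)

lemma sig_le (F : Set (Finset J)) : sig W F ≤ (inferInstance : MeasurableSpace (Om W)) := by
  apply MeasurableSpace.generateFrom_mono
  rintro _ ⟨f, hf, A, hA, rfl⟩
  exact ⟨A, rfl⟩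

lemma bool_mem {α I : Type} [Finite I] {𝒜 : Set (Set α)} (h𝒜 : IsSetAlgebra 𝒜) (s : I → Set α)
    (hs : ∀ i, s i ∈ 𝒜) (Φ : (I → Prop) → Prop) : {x | Φ (fun i => x ∈ s i)} ∈ 𝒜 := by
  classical
  cases nonempty_fintype I
  have h : {x | Φ (fun i => x ∈ s i)} = ⋃ p ∈ (Finset.univ : Finset (I → Prop)).filter Φ,
      ⋂ i ∈ (Finset.univ : Finset I), (if p i then s i else (s i)ᶜ) := by
    ext x
    simp only [Set.mem_ofPred_eq, Set.mem_iUnion, Finset.mem_filter, Finset.mem_univ, true_and,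
      Set.mem_iInter, exists_prop, forall_const]
    constructor
    · intro hx
      refine ⟨_, hx, fun i => ?_⟩
      split_ifs with hi
      · exact hi
      · exact hi
    · rintro ⟨p, hp, hx⟩
      have : (fun i => x ∈ s i) = p := by
        funext i
        have := hx i
        split_ifs at this with hi
        · simp [hi, this]
        · simp only [Set.mem_compl_iff] at this
          simp [hi, this]
      rwa [this]
  rw [h]
  refine h𝒜.biUnion_mem _ fun p _ => h𝒜.biInter_mem _ fun i _ => ?_
  split_ifs
  · exact hs i
  · exact h𝒜.compl_mem (hs i)

lemma isSetAlgebra_measurable {α : Type} (m : MeasurableSpace α) :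
    IsSetAlgebra {s : Set α | MeasurableSet[m] s} where
  empty_mem := @MeasurableSet.empty _ m
  compl_mem _ h := @MeasurableSet.compl _ _ m h
  union_mem _ _ h h' := @MeasurableSet.union _ m _ _ h h'

/-- Normal form of the members of `alg W F`: Boolean combinations of finitely many generators. -/
lemma alg_normal {F : Set (Finset J)} {s : Set (Om W)} (hs : s ∈ alg W F) :
    ∃ (I : Type) (_ : Finite I) (S : I → ∀ n, Set ((j : J) → W n j)) (f : I → Finset J)
      (Φ : (I → Prop) → Prop), (∀ i, f i ∈ F) ∧ (∀ i, Dep (f i) (S i)) ∧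
      s = {ω | Φ (fun i => ω ∈ IntSet (S i))} := by
  induction hs with
  | base s hs =>
    obtain ⟨f, hf, A, hA, rfl⟩ := hs
    exact ⟨Unit, inferInstance, fun _ => A, fun _ => f, fun p => p (), fun _ => hf, fun _ => hA, rfl⟩
  | empty =>
    exact ⟨Empty, inferInstance, fun i => i.elim, fun i => i.elim, fun _ => False,
      fun i => i.elim, fun i => i.elim, rfl⟩
  | compl s _ ih =>
    obtain ⟨I, hI, S, f, Φ, h1, h2, rfl⟩ := ih
    exact ⟨I, hI, S, f, fun p => ¬ Φ p, h1, h2, rfl⟩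
  | union s t _ _ ih ih' =>
    obtain ⟨I, hI, S, f, Φ, h1, h2, rfl⟩ := ih
    obtain ⟨I', hI', S', f', Φ', h1', h2', rfl⟩ := ih'
    refine ⟨I ⊕ I', inferInstance, Sum.elim S S', Sum.elim f f',
      fun p => Φ (fun i => p (Sum.inl i)) ∨ Φ' (fun i => p (Sum.inr i)), ?_, ?_, rfl⟩
    · rintro (i | i)
      · exact h1 i
      · exact h1' i
    · rintro (i | i)
      · exact h2 i
      · exact h2' i

lemma Dep.bool {I : Type} {S : I → ∀ n, Set ((j : J) → W n j)} {e : Finset J}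
    (h : ∀ i, Dep e (S i)) (Φ : (I → Prop) → Prop) :
    Dep e (fun n => {x | Φ (fun i => x ∈ S i n)}) := by
  intro n x y hxy hx
  have : (fun i => y ∈ S i n) = fun i => x ∈ S i n := by
    funext i
    exact propext ⟨h i n y x fun j hj => (hxy j hj).symm, h i n x y hxy⟩
  simpa only [Set.mem_ofPred_eq, this] using hx

lemma alg_internal {e : Finset J} {s : Set (Om W)} (hs : s ∈ alg W {e}) :
    ∃ A, Dep e A ∧ s = IntSet A := by
  obtain ⟨I, hI, S, f, Φ, h1, h2, rfl⟩ := alg_normal hs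
  refine ⟨_, Dep.bool (fun i => ?_) Φ, intSet_bool S Φ⟩
  have := h2 i
  rwa [h1 i] at this

variable (μ : Measure (Om W)) [IsProbabilityMeasure μ]

lemma approx_set {F : Set (Finset J)} {s : Set (Om W)} (hs : MeasurableSet[sig W F] s) {ε : ℝ}
    (hε : 0 < ε) : ∃ t ∈ alg W F, μ.real (symmDiff s t) < ε := by
  have hd := @Measure.MeasureDense.of_generateFrom_isSetAlgebra_finite (Om W) (sig W F)
    (μ.trim (sig_le F)) (alg W F) _ (isSetAlgebra_alg F) (sig_eq F)
  obtain ⟨t, ht, h⟩ := @Measure.MeasureDense.approx _ (sig W F) _ _ hd s hs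
    (@measure_ne_top _ (sig W F) _ _ _) ε hε
  refine ⟨t, ht, ?_⟩
  rw [trim_measurableSet_eq] at h
  · rw [Measure.real]
    exact (ENNReal.lt_ofReal_iff_toReal_lt (measure_ne_top _ _)).1 h
  · exact @MeasurableSet.symmDiff _ (sig W F) _ _ hs (measurableSet_of_alg ht)

/-- `φ` can be approximated, uniformly when tested against measurable sets, by finite linear
combinations of indicators of sets in `𝒜`. -/
def Approx (𝒜 : Set (Set (Om W))) (φ : Om W → ℝ) : Prop :=
  ∀ ε > 0, ∃ (I : Type) (_ : Fintype I) (w : I → ℝ) (P : I → Set (Om W)), (∀ i, P i ∈ 𝒜) ∧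
    ∀ C, MeasurableSet C → |∫ ω in C, φ ω ∂μ - ∑ i, w i * μ.real (P i ∩ C)| ≤ ε

lemma Approx.add {𝒜 : Set (Set (Om W))} {φ ψ : Om W → ℝ} (hφ : Approx μ 𝒜 φ)
    (hψ : Approx μ 𝒜 ψ) (iφ : Integrable φ μ) (iψ : Integrable ψ μ) :
    Approx μ 𝒜 (φ + ψ) := by
  intro ε hε
  obtain ⟨I, _, w, P, hP, h⟩ := hφ (ε / 2) (by positivity)
  obtain ⟨I', _, w', P', hP', h'⟩ := hψ (ε / 2) (by positivity)
  refine ⟨I ⊕ I', inferInstance, Sum.elim w w', Sum.elim P P', ?_, fun C hC => ?_⟩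
  · rintro (i | i)
    · exact hP i
    · exact hP' i
  · simp only [Pi.add_apply, Fintype.sum_sum_type, Sum.elim_inl, Sum.elim_inr]
    rw [integral_add iφ.integrableOn iψ.integrableOn]
    have h1 := h C hC
    have h2 := h' C hC
    rw [abs_le] at *
    constructor <;> linarith

lemma Approx.close {𝒜 : Set (Set (Om W))} {φ : Om W → ℝ} (iφ : Integrable φ μ)
    (h : ∀ ε > 0, ∃ ψ, Approx μ 𝒜 ψ ∧ Integrable ψ μ ∧ ∫ ω, |φ ω - ψ ω| ∂μ ≤ ε) :
    Approx μ 𝒜 φ := by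
  intro ε hε
  obtain ⟨ψ, hψ, iψ, hd⟩ := h (ε / 2) (by positivity)
  obtain ⟨I, _, w, P, hP, h⟩ := hψ (ε / 2) (by positivity)
  refine ⟨I, inferInstance, w, P, hP, fun C hC => ?_⟩
  have h1 := h C hC
  have h2 : |∫ ω in C, φ ω ∂μ - ∫ ω in C, ψ ω ∂μ| ≤ ε / 2 := by
    rw [← integral_sub iφ.integrableOn iψ.integrableOn]
    refine (abs_integral_le_integral_abs).trans (le_trans ?_ hd)
    exact setIntegral_le_integral (iφ.sub iψ).abs (Eventually.of_forall fun ω => abs_nonneg _)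
  rw [abs_le] at *
  constructor <;> linarith

lemma approx_fun {F : Set (Finset J)} {φ : Om W → ℝ} (hφ : StronglyMeasurable[sig W F] φ)
    (iφ : Integrable φ μ) : Approx μ (alg W F) φ := by
  apply Approx.close μ iφ
  intro ε hε
  have hm := sig_le (W := W) F
  have i1 : MemLp φ 1 (μ.trim hm) := memLp_one_iff_integrable.2 (iφ.trim hm hφ)
  obtain ⟨ψ, h1, h2⟩ := @MemLp.exists_simpleFunc_eLpNorm_sub_lt _ (sig W F) _ _ _ _ _ i1
    (by simp) (ENNReal.ofReal ε) (by simpa using hε)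
  have sψ : StronglyMeasurable[sig W F] ψ := @SimpleFunc.stronglyMeasurable _ _ (sig W F) _ ψ
  have iψ : Integrable ψ μ := integrable_of_integrable_trim hm (memLp_one_iff_integrable.1 h2)
  refine ⟨ψ, ?_, iψ, ?_⟩
  · clear h1 h2 sψ iψ
    induction ψ using SimpleFunc.induction with
    | @const c s hs =>
      intro η hη
      obtain ⟨t, ht, hst⟩ := approx_set μ hs (ε := η / (|c| + 1)) (by positivity)
      refine ⟨Unit, inferInstance, fun _ => c, fun _ => t, fun _ => ht, fun C hC => ?_⟩
      have e1 : ∫ ω in C, (@SimpleFunc.piecewise _ _ (sig W F) s hs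
          (@SimpleFunc.const _ _ (sig W F) c) (@SimpleFunc.const _ _ (sig W F) 0)) ω ∂μ = c * μ.real (s ∩ C) := by
        have : (fun ω => (@SimpleFunc.piecewise _ _ (sig W F) s hs
          (@SimpleFunc.const _ _ (sig W F) c)
          (@SimpleFunc.const _ _ (sig W F) 0)) ω) = s.indicator (fun _ => c) := by
          ext ω
          simp [Set.indicator, Set.piecewise]
        rw [this, integral_indicator (hm _ hs), setIntegral_const,
          measureReal_restrict_apply (hm _ hs)]
        simp [mul_comm]
      rw [e1]
      simp only [Finset.univ_unique, Finset.sum_const, Finset.card_singleton, one_smul]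
      rw [← mul_sub, abs_mul]
      have e2 : |μ.real (s ∩ C) - μ.real (t ∩ C)| ≤ η / (|c| + 1) := by
        have f1 : μ.real (s ∩ C) ≤ μ.real (t ∩ C) + μ.real (symmDiff s t) := by
          refine (measureReal_mono ?_).trans (measureReal_union_le _ _)
          rintro ω ⟨h, h'⟩
          by_cases ht : ω ∈ t
          · exact Or.inl ⟨ht, h'⟩
          · exact Or.inr (Or.inl ⟨h, ht⟩)
        have f2 : μ.real (t ∩ C) ≤ μ.real (s ∩ C) + μ.real (symmDiff s t) := by
          refine (measureReal_mono ?_).trans (measureReal_union_le _ _)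
          rintro ω ⟨h, h'⟩
          by_cases ht : ω ∈ s
          · exact Or.inl ⟨ht, h'⟩
          · exact Or.inr (Or.inr ⟨h, ht⟩)
        rw [abs_le]
        constructor <;> linarith
      calc |c| * |μ.real (s ∩ C) - μ.real (t ∩ C)| ≤ |c| * (η / (|c| + 1)) := by gcongr
        _ ≤ (|c| + 1) * (η / (|c| + 1)) := by gcongr; linarith
        _ = η := by field_simp
    | @add f g hd hf hg =>
      have hi : ∀ f : @SimpleFunc (Om W) (sig W F) ℝ, Integrable f μ := fun f =>
        integrable_of_integrable_trim hm (@SimpleFunc.integrable_of_isFiniteMeasure _ _ (sig W F)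
          _ (μ.trim hm) _ f)
      exact Approx.add μ hf hg (hi f) (hi g)
  · rw [eLpNorm_trim hm (hφ.sub sψ), eLpNorm_one_eq_lintegral_enorm] at h1
    have : ∫ ω, |φ ω - ψ ω| ∂μ = (∫⁻ ω, ‖φ ω - ψ ω‖ₑ ∂μ).toReal :=
      integral_norm_eq_lintegral_enorm (iφ.sub iψ).aestronglyMeasurable
    rw [this]
    exact ENNReal.toReal_le_of_le_ofReal hε.le h1.le

end Sigma

/-! ### Conditional independence -/

section Independence

set_option linter.unusedSectionVars false

/-- The tuple agreeing with `x` on `e` and with `y` off `e`. -/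
def slice {Y : J → Type} (e : Finset J) (x y : (j : J) → Y j) : (j : J) → Y j :=
  fun j => if j ∈ e then x j else y j

/-- Freezing the coordinates outside `e` at a suitable value does not decrease a sum in absolute
value. -/
lemma exists_slice {Y : J → Type} [Fintype ((j : J) → Y j)] [Nonempty ((j : J) → Y j)]
    (e : Finset J) (F : ((j : J) → Y j) → ℝ) :
    ∃ y, |∑ x, F x| ≤ |∑ x, F (slice e x y)| := by
  by_contra! hc
  -- exchanging the coordinates outside `e` of a pair is an involution
  have hinv : Function.Involutive (fun p : ((j : J) → Y j) × ((j : J) → Y j) =>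
      (slice e p.1 p.2, slice e p.2 p.1)) := by
    rintro ⟨x, y⟩
    ext j <;> by_cases hj : j ∈ e <;> simp [slice, hj]
  have h1 : ∑ y, ∑ x, F (slice e x y) = Fintype.card ((j : J) → Y j) * ∑ x, F x := by
    rw [Finset.sum_comm, ← Fintype.sum_prod_type']
    rw [Fintype.sum_equiv hinv.toPerm (fun p => F (slice e p.1 p.2)) (fun p => F p.1)
      (fun p => rfl)]
    rw [Fintype.sum_prod_type]
    simp [Finset.mul_sum]
  have h2 : ∑ y, |∑ x, F (slice e x y)| < ∑ _y : (j : J) → Y j, |∑ x, F x| :=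
    Finset.sum_lt_sum_of_nonempty Finset.univ_nonempty fun y _ => hc y
  have h3 := Finset.abs_sum_le_sum_abs (fun y => ∑ x, F (slice e x y)) Finset.univ
  rw [h1, abs_mul, Nat.abs_cast] at h3
  simp only [Finset.sum_const, Finset.card_univ, nsmul_eq_mul] at h2
  linarith

lemma exists_slice_sets {Y : J → Type} [Finite ((j : J) → Y j)] [Nonempty ((j : J) → Y j)]
    (e : Finset J) {I : Type} [Fintype I] (w : I → ℝ) (P : I → Set ((j : J) → Y j))
    (hP : ∀ i x y, (∀ j ∈ e, x j = y j) → x ∈ P i → y ∈ P i) (C : Set ((j : J) → Y j)) :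
    ∃ y, |∑ i, w i * ((P i ∩ C).ncard : ℝ)|
      ≤ |∑ i, w i * ((P i ∩ {x | slice e x y ∈ C}).ncard : ℝ)| := by
  classical
  cases nonempty_fintype ((j : J) → Y j)
  have hn : ∀ D : Set ((j : J) → Y j), (D.ncard : ℝ) = ∑ x, D.indicator (fun _ => (1 : ℝ)) x := by
    intro D
    simp only [Set.indicator_apply]
    rw [Set.ncard_eq_toFinset_card', Finset.sum_boole]
    congr 2
    ext x
    simp
  obtain ⟨y, hy⟩ := exists_slice e (fun x => ∑ i, w i * (P i ∩ C).indicator (fun _ => (1 : ℝ)) x)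
  refine ⟨y, ?_⟩
  have hsl : ∀ i x, slice e x y ∈ P i ↔ x ∈ P i := fun i x =>
    ⟨hP i _ _ fun j hj => by simp [slice, hj], hP i _ _ fun j hj => by simp [slice, hj]⟩
  simp only [hn, Finset.mul_sum]
  rw [Finset.sum_comm]
  refine hy.trans_eq ?_
  rw [Finset.sum_comm]
  simp only [Set.indicator_apply, Set.mem_inter_iff, hsl, Set.mem_ofPred_eq]

variable {W : ℕ → J → Type} [∀ n j, Finite (W n j)] [∀ n j, Nonempty (W n j)]

/-- `μ` extends the limiting counting density of internal sets. -/
def IsLoeb (μ : Measure (Om W)) : Prop :=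
  ∀ A : ∀ n, Set ((j : J) → W n j),
    Tendsto (fun n => ((A n).ncard : ℝ) / Nat.card ((j : J) → W n j))
      (hyperfilter ℕ : Filter ℕ) (𝓝 (μ.real (IntSet A)))

variable {μ : Measure (Om W)} [IsProbabilityMeasure μ]

/-- An `e`-measurable function orthogonal to `sig 𝓖` is orthogonal to `sig 𝓕` as soon as `𝓖`
contains the traces on `e` of the members of `𝓕`: a Boolean combination of `𝓕`-sets can be replaced
by one of its slices. -/
lemma ci_core (hμ : IsLoeb μ) {e : Finset J} {𝓕 𝓖 : Set (Finset J)}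
    (h𝓕 : ∀ f ∈ 𝓕, f ∩ e ∈ 𝓖) {φ : Om W → ℝ} (hφ : StronglyMeasurable[sig W {e}] φ)
    (iφ : Integrable φ μ) (h0 : ∀ C, MeasurableSet[sig W 𝓖] C → ∫ ω in C, φ ω ∂μ = 0)
    {C : Set (Om W)} (hC : MeasurableSet[sig W 𝓕] C) : ∫ ω in C, φ ω ∂μ = 0 := by
  classical
  have key : ∀ C ∈ alg W 𝓕, ∫ ω in C, φ ω ∂μ = 0 := by
    intro C hC
    obtain ⟨I, _, S, f, Φ, hf, hS, rfl⟩ := alg_normal hC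
    have hmC : MeasurableSet {ω : Om W | Φ fun i => ω ∈ IntSet (S i)} :=
      sig_le _ _ (measurableSet_of_alg hC)
    refine abs_nonpos_iff.1 (le_of_forall_pos_le_add fun ε hε => ?_)
    obtain ⟨K, _, w, P, hP, happ⟩ := approx_fun μ hφ iφ (ε / 2) (by positivity)
    choose Q hQ hPQ using fun i => alg_internal (hP i)
    choose y hy using fun n => exists_slice_sets e w (fun i => Q i n) (fun i => hQ i n)
      {x | Φ fun i => x ∈ S i n}
    have hsub : ({ω : Om W | Φ fun i => ω ∈ IntSet (fun n => {x | slice e x (y n) ∈ S i n})} :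
        Set (Om W)) ∈ alg W 𝓖 := by
      refine bool_mem (isSetAlgebra_alg 𝓖) _ (fun i => ?_) Φ
      refine self_subset_generateSetAlgebra ⟨f i ∩ e, h𝓕 _ (hf i), _, ?_, rfl⟩
      intro n a b hab ha
      refine hS i n _ _ (fun j hj => ?_) ha
      by_cases hje : j ∈ e
      · simp [slice, hje, hab j (Finset.mem_inter.2 ⟨hj, hje⟩)]
      · simp [slice, hje]
    have h1 := happ _ hmC
    have h2 := happ _ (sig_le _ _ (measurableSet_of_alg hsub))
    rw [h0 _ (measurableSet_of_alg hsub)] at h2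
    have h3 : |∑ i, w i * μ.real (P i ∩ {ω : Om W | Φ fun i => ω ∈ IntSet (S i)})| ≤
        |∑ i, w i * μ.real (P i ∩ {ω : Om W |
          Φ fun i => ω ∈ IntSet (fun n => {x | slice e x (y n) ∈ S i n})})| := by
      simp only [hPQ, intSet_bool, intSet_inter]
      refine le_of_tendsto_of_tendsto
        (tendsto_finsetSum _ fun i _ => (hμ _).const_mul (w i)).abs
        (tendsto_finsetSum _ fun i _ => (hμ _).const_mul (w i)).abs
        (Eventually.of_forall fun n => ?_)
      simp only [← mul_div_assoc, ← Finset.sum_div, abs_div]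
      exact div_le_div_of_nonneg_right (hy n) (abs_nonneg _)
    rw [abs_le] at h1 h2
    have h4 : |∑ i, w i * μ.real (P i ∩ {ω : Om W |
          Φ fun i => ω ∈ IntSet (fun n => {x | slice e x (y n) ∈ S i n})})| ≤ ε / 2 :=
      abs_le.2 ⟨by linarith, by linarith⟩
    have h5 := abs_le.1 (h3.trans h4)
    exact abs_le.2 ⟨by linarith, by linarith⟩
  have hu : ∫ ω, φ ω ∂μ = 0 := by
    simpa using h0 Set.univ (@MeasurableSet.univ _ (sig W 𝓖))
  have hle := sig_le (W := W) 𝓕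
  induction C, hC using MeasurableSpace.induction_on_inter (sig_eq 𝓕)
    (isSetAlgebra_alg 𝓕).isSetRing.isSetSemiring.isPiSystem with
  | empty => simp
  | basic t ht => exact key t ht
  | compl t ht ih =>
    have := integral_add_compl (hle _ ht) iφ
    linarith
  | iUnion g hd hg ih =>
    rw [integral_iUnion (fun i => hle _ (hg i)) hd iφ.integrableOn]
    simp [ih]

/-- The conditional probability of a set. -/
noncomputable def cprob (μ : Measure (Om W)) (F : Set (Finset J)) (A : Set (Om W)) : Om W → ℝ :=
  μ[A.indicator (fun _ => (1 : ℝ)) | sig W F]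

lemma cprob_meas (F : Set (Finset J)) (A : Set (Om W)) :
    StronglyMeasurable[sig W F] (cprob μ F A) := stronglyMeasurable_condExp

lemma cprob_int (F : Set (Finset J)) (A : Set (Om W)) : Integrable (cprob μ F A) μ :=
  integrable_condExp

lemma integrable_ind {A : Set (Om W)} (hA : MeasurableSet A) :
    Integrable (A.indicator (fun _ => (1 : ℝ))) μ := (integrable_const 1).indicator hA

lemma cprob_nonneg (F : Set (Finset J)) (A : Set (Om W)) : ∀ᵐ ω ∂μ, 0 ≤ cprob μ F A ω :=
  condExp_nonneg (Eventually.of_forall fun ω => Set.indicator_nonneg (fun _ _ => zero_le_one) ω)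

lemma setIntegral_ind {A C : Set (Om W)} (hA : MeasurableSet A) :
    ∫ ω in C, A.indicator (fun _ => (1 : ℝ)) ω ∂μ = μ.real (A ∩ C) := by
  rw [integral_indicator hA, setIntegral_const, measureReal_restrict_apply hA]
  simp

lemma ci_self {F : Set (Finset J)} {A C : Set (Om W)} (hA : MeasurableSet A)
    (hC : MeasurableSet[sig W F] C) : ∫ ω in C, cprob μ F A ω ∂μ = μ.real (A ∩ C) := by
  rw [← setIntegral_ind hA]
  exact setIntegral_condExp (sig_le F) (integrable_ind hA) hC

/-- Given the information in `sig 𝓖`, an `e`-set is independent of `sig 𝓕`. -/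
lemma ci (hμ : IsLoeb μ) {e : Finset J} {𝓕 𝓖 : Set (Finset J)}
    (h𝓕 : ∀ f ∈ 𝓕, f ∩ e ∈ 𝓖) (h𝓖 : ∀ g ∈ 𝓖, g ⊆ e) {A C : Set (Om W)}
    (hA : MeasurableSet[sig W {e}] A) (hC : MeasurableSet[sig W 𝓕] C) :
    ∫ ω in C, cprob μ 𝓖 A ω ∂μ = μ.real (A ∩ C) := by
  have hA' := sig_le _ _ hA
  have hmono : sig W 𝓖 ≤ sig W {e} := sig_mono fun g hg => ⟨e, rfl, h𝓖 g hg⟩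
  have h1 : StronglyMeasurable[sig W {e}]
      (cprob μ 𝓖 A - A.indicator (fun _ => (1 : ℝ))) :=
    ((cprob_meas 𝓖 A).mono hmono).sub
      ((@stronglyMeasurable_const _ _ (sig W {e}) _ (1 : ℝ)).indicator hA)
  have h2 := ci_core hμ h𝓕 h1 ((cprob_int 𝓖 A).sub (integrable_ind hA')) (fun D hD => by
    simp only [Pi.sub_apply]
    rw [integral_sub (cprob_int 𝓖 A).integrableOn (integrable_ind hA').integrableOn,
      ci_self hA' hD, setIntegral_ind hA', sub_self]) hC
  simp only [Pi.sub_apply] at h2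
  rw [integral_sub (cprob_int 𝓖 A).integrableOn (integrable_ind hA').integrableOn,
    setIntegral_ind hA'] at h2
  linarith

end Independence

/-! ### Passing to supports of conditional probabilities -/

section Peel

set_option linter.unusedSectionVars false

/-- The subsets of `e` of size at most `k`. -/
def low (e : Finset J) (k : ℕ) : Set (Finset J) := {f | f ⊆ e ∧ f.card ≤ k}

variable {W : ℕ → J → Type} [∀ n j, Finite (W n j)] [∀ n j, Nonempty (W n j)]

lemma sig_low_mono {e e' : Finset J} {k k' : ℕ} (he : e ⊆ e') (hk : k ≤ k') :
    sig W (low e k) ≤ sig W (low e' k') :=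
  sig_mono fun f hf => ⟨f, ⟨hf.1.trans he, hf.2.trans hk⟩, subset_rfl⟩

lemma alg_low_mono {e e' : Finset J} {k k' : ℕ} (he : e ⊆ e') (hk : k ≤ k') :
    alg W (low e k) ⊆ alg W (low e' k') :=
  alg_mono fun f hf => ⟨f, ⟨hf.1.trans he, hf.2.trans hk⟩, subset_rfl⟩

lemma sig_singleton_le {f : Finset J} {F : Set (Finset J)} (h : ∃ g ∈ F, f ⊆ g) :
    sig W {f} ≤ sig W F :=
  sig_mono fun g hg => by
    rw [Set.mem_singleton_iff.1 hg]
    exact h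

lemma sig_low_le_self (e : Finset J) (k : ℕ) : sig W (low e k) ≤ sig W {e} :=
  sig_mono fun _ hf => ⟨e, rfl, hf.1⟩

variable {μ : Measure (Om W)} [IsProbabilityMeasure μ]

lemma null_pos {φ : Om W → ℝ} (iφ : Integrable φ μ) (h0 : ∀ᵐ ω ∂μ, 0 ≤ φ ω) {C : Set (Om W)}
    (hC : MeasurableSet C) (h : ∫ ω in C, φ ω ∂μ ≤ 0) : μ (C ∩ {ω | 0 < φ ω}) = 0 := by
  have h1 : 0 ≤ᵐ[μ.restrict C] φ := ae_restrict_of_ae h0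
  have h2 : ∫ ω in C, φ ω ∂μ = 0 := le_antisymm h (integral_nonneg_of_ae h1)
  rw [setIntegral_eq_zero_iff_of_nonneg_ae h1 iφ.integrableOn] at h2
  have h3 := (ae_restrict_iff' hC).1 h2
  refine measure_mono_null ?_ (ae_iff.1 h3)
  rintro ω ⟨hω, hpos⟩ hc
  exact absurd (hc hω) (ne_of_gt hpos)

lemma measurable_pos (F : Set (Finset J)) (A : Set (Om W)) :
    MeasurableSet[sig W F] {ω | 0 < cprob μ F A ω} :=
  @StronglyMeasurable.measurableSet_lt _ _ (sig W F) _ _ _ _ _ _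
    (@stronglyMeasurable_const _ _ (sig W F) _ (0 : ℝ)) (cprob_meas F A)

lemma meas_biInter {m : MeasurableSpace (Om W)} {ι : Type} (T : Finset ι) {A : ι → Set (Om W)}
    (h : ∀ i ∈ T, MeasurableSet[m] (A i)) : MeasurableSet[m] (⋂ i ∈ T, A i) :=
  @Finset.measurableSet_biInter _ _ m A T h

lemma inter_mem_low {k : ℕ} {f g : Finset J} (hg : g.card ≤ k ∨ (g.card = k + 1 ∧ ¬ g ⊆ f)) :
    g ∩ f ∈ low f k := by
  refine ⟨Finset.inter_subset_right, ?_⟩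
  rcases hg with hg | ⟨hg, hn⟩
  · exact (Finset.card_le_card Finset.inter_subset_left).trans hg
  · have : g ∩ f ⊂ g := by
      refine ⟨Finset.inter_subset_left, fun h => hn (h.trans Finset.inter_subset_right)⟩
    have := Finset.card_lt_card this
    omega

/-- If sets `A f` of order `k + 1` have null intersection inside a set of order `k`, then so do the
supports of their conditional probabilities given the information of order `k`. -/
lemma peel (hμ : IsLoeb μ) {k : ℕ} (A : Finset J → Set (Om W)) (T : Finset (Finset J))
    (hT : ∀ f ∈ T, f.card = k + 1) (hA : ∀ f ∈ T, MeasurableSet[sig W {f}] (A f)) :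
    ∀ C : Set (Om W), MeasurableSet[sig W (low univ k)] C → μ (C ∩ ⋂ f ∈ T, A f) = 0 →
      μ (C ∩ ⋂ f ∈ T, {ω | 0 < cprob μ (low f k) (A f) ω}) = 0 := by
  induction T using Finset.induction_on with
  | empty => intro C _ h; simpa using h
  | insert f T hf ih =>
    intro C hC h
    have hfc := hT f (Finset.mem_insert_self _ _)
    set 𝓕 : Set (Finset J) := {g | g.card ≤ k ∨ (g.card = k + 1 ∧ ¬ g ⊆ f)} with h𝓕
    have hC1 : MeasurableSet[sig W 𝓕] (C ∩ ⋂ g ∈ T, A g) := by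
      refine @MeasurableSet.inter _ (sig W 𝓕) _ _ ?_ (meas_biInter T fun g hg => ?_)
      · exact sig_mono (fun g hg => ⟨g, Or.inl hg.2, subset_rfl⟩) _ hC
      · have hgc := hT g (Finset.mem_insert_of_mem hg)
        refine sig_singleton_le ⟨g, Or.inr ⟨hgc, fun hs => ?_⟩, subset_rfl⟩ _
          (hA g (Finset.mem_insert_of_mem hg))
        have := Finset.eq_of_subset_of_card_le hs (by omega)
        exact hf (this ▸ hg)
    have h1 := ci hμ (𝓖 := low f k) (fun g hg => inter_mem_low hg) (fun g hg => hg.1)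
      (hA f (Finset.mem_insert_self _ _)) hC1
    have h2 : μ.real (A f ∩ (C ∩ ⋂ g ∈ T, A g)) = 0 := by
      rw [measureReal_eq_zero_iff]
      refine measure_mono_null ?_ h
      rw [Finset.set_biInter_insert]
      rintro ω ⟨a, b, c⟩
      exact ⟨b, a, c⟩
    have h3 := null_pos (cprob_int _ _) (cprob_nonneg _ _) (sig_le _ _ hC1) (h1.trans h2).le
    have h4 := ih (fun g hg => hT g (Finset.mem_insert_of_mem hg))
      (fun g hg => hA g (Finset.mem_insert_of_mem hg))
      (C ∩ {ω | 0 < cprob μ (low f k) (A f) ω})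
      (@MeasurableSet.inter _ (sig W (low univ k)) _ _ hC
        (sig_low_mono (Finset.subset_univ _) le_rfl _ (measurable_pos _ _)))
      (by
        refine measure_mono_null ?_ h3
        rintro ω ⟨⟨a, b⟩, c⟩
        exact ⟨⟨a, c⟩, b⟩)
    rw [Finset.set_biInter_insert, ← Set.inter_assoc]
    exact h4

/-- The points where, conditionally on the information of order `k` inside `e`, only a small
proportion of the cell `A` lies outside `E`. -/
def core (μ : Measure (Om W)) (k : ℕ) (c : ℝ) (E : Set (Om W)) (e : Finset J) (A : Set (Om W)) :
    Set (Om W) :=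
  {ω | cprob μ (low e k) (A \ E) ω < c * cprob μ (low e k) A ω}

lemma measurable_core (k : ℕ) (c : ℝ) (E : Set (Om W)) (e : Finset J) (A : Set (Om W)) :
    MeasurableSet[sig W (low e k)] (core μ k c E e A) :=
  @StronglyMeasurable.measurableSet_lt _ _ (sig W (low e k)) _ _ _ _ _ _
    (cprob_meas _ _) ((cprob_meas _ _).const_mul c)

/-- A counting lemma: the cores of the cells have null intersection whenever the `E e` do. -/
lemma null_core (hμ : IsLoeb μ) {k : ℕ} (H : Finset (Finset J)) (E : Finset J → Set (Om W))
    (hE : ∀ e, MeasurableSet[sig W {e}] (E e)) (h0 : μ (⋂ e ∈ H, E e) = 0) {c : ℝ}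
    (hc : 0 < c) (hcH : c * H.card < 1) (A : Finset J → Set (Om W))
    (hA : ∀ f, MeasurableSet[sig W {f}] (A f)) (AA : Finset J → Set (Om W))
    (hAA : ∀ e, AA e = ⋂ f ∈ univ.filter (fun f : Finset J => f.card = k + 1 ∧ f ⊆ e), A f) :
    μ (⋂ e ∈ H, core μ k c (E e) e (AA e)) = 0 := by
  have hAAm : ∀ e, MeasurableSet[sig W {e}] (AA e) := by
    intro e
    rw [hAA]
    refine meas_biInter _ fun f hf => ?_
    exact sig_singleton_le ⟨e, Set.mem_singleton e, (Finset.mem_filter.1 hf).2.2⟩ _ (hA f)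
  set C := ⋂ e ∈ H, core μ k c (E e) e (AA e) with hCdef
  have hC : MeasurableSet[sig W (low univ k)] C := meas_biInter _ fun e _ =>
    sig_low_mono (Finset.subset_univ _) le_rfl _ (measurable_core _ _ _ _ _)
  have hC' : MeasurableSet C := sig_le _ _ hC
  set T := univ.filter (fun f : Finset J => f.card = k + 1 ∧ ∃ e ∈ H, f ⊆ e) with hT
  have hm : ∀ {e : Finset J} {B}, MeasurableSet[sig W {e}] B → MeasurableSet B :=
    fun h => sig_le _ _ h
  have step1 : μ (C ∩ ⋂ f ∈ T, A f) = 0 := by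
    have hmem : ∀ e ∈ H, μ.real ((C ∩ ⋂ f ∈ T, A f) \ E e) ≤ c * μ.real (C ∩ ⋂ f ∈ T, A f) := by
      intro e he
      set R := ⋂ f ∈ T.filter (fun f => ¬ f ⊆ e), A f with hR
      have hsplit : C ∩ ⋂ f ∈ T, A f = AA e ∩ (C ∩ R) := by
        ext ω
        simp only [hAA, hR, Set.mem_inter_iff, Set.mem_iInter, Finset.mem_filter, hT,
          Finset.mem_univ, true_and]
        constructor
        · rintro ⟨h, h'⟩
          exact ⟨fun f hf => h' f ⟨hf.1, e, he, hf.2⟩, h, fun f hf => h' f hf.1⟩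
        · rintro ⟨h, h', h''⟩
          refine ⟨h', fun f hf => ?_⟩
          by_cases hfe : f ⊆ e
          · exact h f ⟨hf.1, hfe⟩
          · exact h'' f ⟨hf, hfe⟩
      set 𝓕 : Set (Finset J) := {g | g.card ≤ k ∨ (g.card = k + 1 ∧ ¬ g ⊆ e)} with h𝓕
      have hD : MeasurableSet[sig W 𝓕] (C ∩ R) := by
        refine @MeasurableSet.inter _ (sig W 𝓕) _ _ ?_ (meas_biInter _ fun g hg => ?_)
        · exact sig_mono (fun g hg => ⟨g, Or.inl hg.2, subset_rfl⟩) _ hC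
        · simp only [hT, Finset.mem_filter, Finset.mem_univ, true_and] at hg
          exact sig_singleton_le ⟨g, Or.inr ⟨hg.1.1, hg.2⟩, subset_rfl⟩ _ (hA g)
      have i1 := ci hμ (𝓖 := low e k) (fun g hg => inter_mem_low hg) (fun g hg => hg.1)
        (@MeasurableSet.diff _ (sig W {e}) _ _ (hAAm e) (hE e)) hD
      have i2 := ci hμ (𝓖 := low e k) (fun g hg => inter_mem_low hg) (fun g hg => hg.1)
        (hAAm e) hD
      have e1 : (C ∩ ⋂ f ∈ T, A f) \ E e = (AA e \ E e) ∩ (C ∩ R) := by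
        rw [hsplit]
        ext ω
        simp only [Set.mem_sdiff, Set.mem_inter_iff]
        tauto
      rw [e1, hsplit, ← i1, ← i2, ← integral_const_mul]
      refine setIntegral_mono_on (cprob_int _ _).integrableOn
        ((cprob_int _ _).const_mul c).integrableOn (sig_le _ _ hD) fun ω hω => ?_
      have : ω ∈ core μ k c (E e) e (AA e) := Set.mem_iInter₂.1 hω.1 e he
      exact this.le
    have hcov : μ.real (C ∩ ⋂ f ∈ T, A f) ≤
        ∑ e ∈ H, μ.real ((C ∩ ⋂ f ∈ T, A f) \ E e) := by
      have h1 : C ∩ ⋂ f ∈ T, A f ⊆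
          (⋂ e ∈ H, E e) ∪ ⋃ e ∈ H, ((C ∩ ⋂ f ∈ T, A f) \ E e) := by
        intro ω hω
        by_cases h : ω ∈ ⋂ e ∈ H, E e
        · exact Or.inl h
        · right
          simp only [Set.mem_iInter, not_forall] at h
          obtain ⟨e, he, h⟩ := h
          exact Set.mem_iUnion₂.2 ⟨e, he, hω, h⟩
      refine (measureReal_mono h1).trans ((measureReal_union_le _ _).trans ?_)
      rw [measureReal_def, h0, ENNReal.toReal_zero, zero_add]
      exact measureReal_biUnion_finset_le _ _
    have hsum := hcov.trans (Finset.sum_le_sum hmem)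
    rw [Finset.sum_const, nsmul_eq_mul] at hsum
    have hnn : 0 ≤ μ.real (C ∩ ⋂ f ∈ T, A f) := measureReal_nonneg
    rw [← measureReal_eq_zero_iff]
    nlinarith
  have step2 := peel hμ A T (fun f hf => (Finset.mem_filter.1 hf).2.1) (fun f _ => hA f) C hC step1
  have step3 : ∀ f ∈ T, μ (C ∩ {ω | 0 < cprob μ (low f k) (A f) ω}ᶜ) = 0 := by
    intro f hf
    obtain ⟨hfk, e, he, hfe⟩ := (Finset.mem_filter.1 hf).2
    set Z := {ω | 0 < cprob μ (low f k) (A f) ω}ᶜ with hZ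
    have hZm : MeasurableSet[sig W (low f k)] Z :=
      @MeasurableSet.compl _ _ (sig W (low f k)) (measurable_pos _ _)
    have hZc : MeasurableSet[sig W (low e k)] (Z ∩ core μ k c (E e) e (AA e)) :=
      @MeasurableSet.inter _ (sig W (low e k)) _ _ (sig_low_mono hfe le_rfl _ hZm)
        (measurable_core _ _ _ _ _)
    have i1 := ci_self (μ := μ) (hm (hAAm e)) hZc
    have i2 := ci_self (μ := μ) (hm (hA f)) hZm
    have i3 : ∫ ω in Z, cprob μ (low f k) (A f) ω ∂μ ≤ 0 :=
      setIntegral_nonpos (sig_le _ _ hZm) fun ω hω => not_lt.1 hω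
    have i4 : μ.real (AA e ∩ (Z ∩ core μ k c (E e) e (AA e))) ≤ μ.real (A f ∩ Z) := by
      refine measureReal_mono ?_
      rintro ω ⟨h1, h2, _⟩
      rw [hAA] at h1
      exact ⟨Set.mem_iInter₂.1 h1 f (by simp [hfk, hfe]), h2⟩
    have i5 := null_pos (cprob_int _ _) (cprob_nonneg _ _) (sig_le _ _ hZc)
      (i1.trans_le (i4.trans (i2.symm.trans_le i3)))
    have i6 := ae_iff.1 (cprob_nonneg (μ := μ) (low e k) (AA e \ E e))
    refine measure_mono_null ?_ (measure_union_null i5 i6)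
    rintro ω ⟨hω, hωZ⟩
    have hωc : ω ∈ core μ k c (E e) e (AA e) := Set.mem_iInter₂.1 hω e he
    by_cases hu : 0 ≤ cprob μ (low e k) (AA e \ E e) ω
    · refine Or.inl ⟨⟨hωZ, hωc⟩, ?_⟩
      exact pos_of_mul_pos_right (hu.trans_lt hωc) hc.le
    · exact Or.inr hu
  have hunion : C ⊆ (C ∩ ⋂ f ∈ T, {ω | 0 < cprob μ (low f k) (A f) ω}) ∪
      ⋃ f ∈ T, (C ∩ {ω | 0 < cprob μ (low f k) (A f) ω}ᶜ) := by
    intro ω hω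
    by_cases h : ω ∈ ⋂ f ∈ T, {ω | 0 < cprob μ (low f k) (A f) ω}
    · exact Or.inl ⟨hω, h⟩
    · right
      rw [Set.mem_iInter₂] at h
      push Not at h
      obtain ⟨f, hf, h⟩ := h
      exact Set.mem_iUnion₂.2 ⟨f, hf, hω, h⟩
  refine measure_mono_null hunion (measure_union_null step2 ?_)
  exact (measure_biUnion_null_iff T.countable_toSet).2 step3

end Peel

/-! ### The removal lemma in the limit space -/

section Limit

set_option linter.unusedSectionVars false

variable {W : ℕ → J → Type} [∀ n j, Finite (W n j)] [∀ n j, Nonempty (W n j)]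

lemma sig_low_zero (e : Finset J) {s : Set (Om W)} (hs : MeasurableSet[sig W (low e 0)] s) :
    s = ∅ ∨ s = Set.univ := by
  rw [← MeasurableSpace.measurableSet_bot_iff]
  have h : sig W (low e 0) ≤ ⊥ := by
    refine MeasurableSpace.generateFrom_le ?_
    rintro _ ⟨f, ⟨_, hf⟩, A, hA, rfl⟩
    rw [MeasurableSpace.measurableSet_bot_iff]
    have hf0 : f = ∅ := Finset.card_eq_zero.1 (Nat.le_zero.1 hf)
    subst hf0
    rcases Set.eq_empty_or_nonempty (IntSet A) with h | ⟨ω, hω⟩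
    · exact Or.inl h
    · refine Or.inr (Set.eq_univ_of_forall fun ω' => ?_)
      filter_upwards [hω] with n hn
      exact hA n _ _ (by simp) hn
  exact h _ hs

variable {μ : Measure (Om W)} [IsProbabilityMeasure μ]

lemma sum_inter_le {B : Set (Om W)} (hB : MeasurableSet B) (Q : Finset (Set (Om W)))
    (hQ : ∀ A ∈ Q, MeasurableSet A) (hd : ∀ A ∈ Q, ∀ A' ∈ Q, A ≠ A' → A ∩ A' = ∅) :
    ∑ A ∈ Q, μ.real (A ∩ B) ≤ μ.real B := by
  rw [← measureReal_biUnion_finset (f := fun A => A ∩ B)]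
  · exact measureReal_mono (Set.iUnion₂_subset fun A _ => Set.inter_subset_right)
  · intro A hA A' hA' hne
    refine Set.disjoint_iff_inter_eq_empty.2 ?_
    have := hd A hA A' hA' hne
    refine Set.eq_empty_of_subset_empty ?_
    rintro ω ⟨⟨h1, _⟩, h2, _⟩
    exact this ▸ ⟨h1, h2⟩
  · exact fun A hA => (hQ A hA).inter hB

/-- Off its core, a cell meets a set `G` of order `k` only in proportion to the part of it lying in
`G \ E`. -/
lemma off_core {k : ℕ} {c : ℝ} (hc : 0 < c) {e : Finset J} {A E G : Set (Om W)}
    (hA : MeasurableSet A) (hE : MeasurableSet E) (hG : MeasurableSet[sig W (low e k)] G) :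
    μ.real (A ∩ ((core μ k c E e A)ᶜ ∩ G)) ≤ c⁻¹ * μ.real (A ∩ (G \ E)) := by
  have hD : MeasurableSet[sig W (low e k)] ((core μ k c E e A)ᶜ ∩ G) :=
    @MeasurableSet.inter _ (sig W (low e k)) _ _
      (@MeasurableSet.compl _ _ (sig W (low e k)) (measurable_core _ _ _ _ _)) hG
  have i1 := ci_self (μ := μ) hA hD
  have i2 := ci_self (μ := μ) (hA.diff hE) hD
  have h1 : c * μ.real (A ∩ ((core μ k c E e A)ᶜ ∩ G)) ≤
      μ.real ((A \ E) ∩ ((core μ k c E e A)ᶜ ∩ G)) := by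
    rw [← i1, ← i2, ← integral_const_mul]
    exact setIntegral_mono_on ((cprob_int _ _).const_mul c).integrableOn
      (cprob_int _ _).integrableOn (sig_le _ _ hD) fun ω hω => not_lt.1 hω.1
  have h2 : μ.real ((A \ E) ∩ ((core μ k c E e A)ᶜ ∩ G)) ≤ μ.real (A ∩ (G \ E)) := by
    refine measureReal_mono ?_
    rintro ω ⟨⟨a, b⟩, _, d⟩
    exact ⟨a, d, b⟩
  rw [inv_mul_eq_div, le_div_iff₀ hc]
  linarith

/-- Removal in the limit space, by induction on the order `k`: sets of order `k` with null
intersection are, up to `ε`, contained in elementary sets of order `k` with empty intersection. -/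
lemma removal_limit (hμ : IsLoeb μ) (k : ℕ) : ∀ (H : Finset (Finset J))
    (E : Finset J → Set (Om W)), (∀ e, MeasurableSet[sig W (low e k)] (E e)) →
    μ (⋂ e ∈ H, E e) = 0 → ∀ ε > 0, ∃ F : Finset J → Set (Om W),
      (∀ e, F e ∈ alg W (low e k)) ∧ ⋂ e ∈ H, F e = ∅ ∧ ∀ e ∈ H, μ.real (E e \ F e) ≤ ε := by
  classical
  induction k with
  | zero =>
    intro H E hE h0 ε hε
    refine ⟨E, fun e => ?_, ?_, fun e _ => by simp [hε.le]⟩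
    · rcases sig_low_zero e (hE e) with h | h
      · rw [h]; exact (isSetAlgebra_alg _).empty_mem
      · rw [h]; exact (isSetAlgebra_alg _).univ_mem
    · have hm : MeasurableSet[sig W (low univ 0)] (⋂ e ∈ H, E e) := meas_biInter _ fun e _ =>
        sig_low_mono (Finset.subset_univ _) le_rfl _ (hE e)
      rcases sig_low_zero _ hm with h | h
      · exact h
      · rw [h] at h0
        simp at h0
  | succ k ih =>
    intro H E hE h0 ε hε
    obtain ⟨c, hc, hcH⟩ : ∃ c : ℝ, 0 < c ∧ c * H.card < 1 := by
      refine ⟨1 / (H.card + 1), by positivity, ?_⟩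
      rw [one_div, inv_mul_eq_div, div_lt_one (by positivity)]
      linarith
    set η := ε / (2 * (1 + c⁻¹)) with hη
    have hηpos : 0 < η := by positivity
    choose E' hE' hEE' using fun e => approx_set μ (hE e) hηpos
    choose I hI S' f' Φ hf' hS' hEq using fun e => alg_normal (hE' e)
    let K := Σ e : Finset J, I e
    let S : K → ∀ n, Set ((j : J) → W n j) := fun i => S' i.1 i.2
    let f : K → Finset J := fun i => f' i.1 i.2
    have hS : ∀ i, Dep (f i) (S i) := fun i => hS' i.1 i.2
    have hK : Finite K := inferInstance
    cases nonempty_fintype K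
    -- `A α g` and `AA α e` are the cells given by the generators of order `k + 1` living on `g`
    -- and inside `e`, respectively
    let A : (K → Prop) → Finset J → Set (Om W) := fun α g =>
      {ω | ∀ i, f i = g → (ω ∈ IntSet (S i) ↔ α i)}
    let AA : (K → Prop) → Finset J → Set (Om W) := fun α e =>
      {ω | ∀ i, (f i).card = k + 1 ∧ f i ⊆ e → (ω ∈ IntSet (S i) ↔ α i)}
    have hcell : ∀ (F : Set (Finset J)) (p : K → Prop), (∀ i, p i → f i ∈ F) → ∀ α : K → Prop,
        {ω : Om W | ∀ i, p i → (ω ∈ IntSet (S i) ↔ α i)} ∈ alg W F := by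
      intro F p hp α
      have h1 := bool_mem (isSetAlgebra_alg (W := W) F)
        (fun i => if p i then IntSet (S i) else ∅) (fun i => by
          split_ifs with h
          · exact self_subset_generateSetAlgebra ⟨f i, hp i h, _, hS i, rfl⟩
          · exact (isSetAlgebra_alg _).empty_mem)
        (fun q => ∀ i, p i → (q i ↔ α i))
      convert h1 using 1
      ext ω
      simp only [Set.mem_ofPred_eq]
      refine forall_congr' fun i => forall_congr' fun h => ?_
      rw [if_pos h]
    have hA : ∀ α g, MeasurableSet[sig W {g}] (A α g) := fun α g =>
      measurableSet_of_alg (hcell {g} (fun i => f i = g) (fun i h => h) α)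
    have hAA : ∀ α e, AA α e ∈ alg W (low e (k + 1)) := fun α e =>
      hcell (low e (k + 1)) (fun i => (f i).card = k + 1 ∧ f i ⊆ e) (fun i h => ⟨h.2, h.1.le⟩) α
    have hAAm : ∀ α e, MeasurableSet (AA α e) := fun α e =>
      sig_le _ _ (measurableSet_of_alg (hAA α e))
    have hEm : ∀ e, MeasurableSet (E e) := fun e => sig_le _ _ (hE e)
    have hnull : ∀ α, μ (⋂ e ∈ H, core μ k c (E e) e (AA α e)) = 0 := fun α => by
      refine null_core hμ H E (fun e => sig_low_le_self e (k + 1) _ (hE e)) h0 hc hcH (A α) (hA α)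
        (AA α) fun e => ?_
      ext ω
      simp only [A, AA, Set.mem_iInter, Finset.mem_filter, Finset.mem_univ, true_and,
        Set.mem_ofPred_eq]
      constructor
      · rintro h g hg i rfl
        exact h i hg
      · intro h i hi
        exact h _ hi i rfl
    set N : ℝ := (Fintype.card (K → Prop) : ℝ) with hN
    have hNpos : 0 < N := by
      rw [hN]
      exact_mod_cast Fintype.card_pos
    choose G' hG' hG'e hG'm using fun α => ih H (fun e => core μ k c (E e) e (AA α e))
      (fun e => measurable_core _ _ _ _ _) (hnull α) (ε / (2 * N)) (by positivity)
    refine ⟨fun e => {ω | ∀ α, ω ∈ AA α e → ω ∈ G' α e}, fun e => ?_, ?_, fun e he => ?_⟩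
    · have h1 := bool_mem (isSetAlgebra_alg (W := W) (low e (k + 1)))
        (fun p : (K → Prop) × Bool => if p.2 then AA p.1 e else G' p.1 e) (fun p => by
          split_ifs with h
          · exact hAA _ _
          · exact alg_low_mono subset_rfl (Nat.le_succ k) (hG' _ _))
        (fun q => ∀ α, q (α, true) → q (α, false))
      simpa using h1
    · refine Set.eq_empty_of_subset_empty fun ω hω => ?_
      have : ω ∈ ⋂ e ∈ H, G' (fun i => ω ∈ IntSet (S i)) e := by
        simp only [Set.mem_iInter] at hω ⊢
        exact fun e he => hω e he _ fun i _ => Iff.rfl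
      rw [hG'e] at this
      exact this
    · -- on each cell, the elementary approximation of `E e` agrees with a set of order `k`
      have hG : ∀ α, ∃ G, MeasurableSet[sig W (low e k)] G ∧ AA α e ∩ G = AA α e ∩ E' e := by
        intro α
        refine ⟨{ω | Φ e (fun i => if (f' e i).card = k + 1 then α ⟨e, i⟩ else
          ω ∈ IntSet (S' e i))}, ?_, ?_⟩
        · have h1 := bool_mem (isSetAlgebra_alg (W := W) (low e k))
            (fun i => if (f' e i).card = k + 1 then ∅ else IntSet (S' e i)) (fun i => by
              split_ifs with h
              · exact (isSetAlgebra_alg _).empty_mem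
              · have h2 := hf' e i
                refine self_subset_generateSetAlgebra ⟨f' e i, ⟨h2.1, ?_⟩, _, hS' e i, rfl⟩
                have := h2.2
                omega)
            (fun q => Φ e (fun i => if (f' e i).card = k + 1 then α ⟨e, i⟩ else q i))
          refine measurableSet_of_alg ?_
          convert h1 using 1
          ext ω
          simp only [Set.mem_ofPred_eq]
          refine iff_of_eq (congrArg _ (funext fun i => ?_))
          split_ifs <;> rfl
        · ext ω
          simp only [Set.mem_inter_iff]
          refine and_congr_right fun hω => ?_
          rw [hEq e]
          refine iff_of_eq (congrArg (Φ e) (funext fun i => ?_))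
          split_ifs with h
          · exact (propext (hω ⟨e, i⟩ ⟨h, (hf' e i).1⟩)).symm
          · rfl
      let Q : Finset (Set (Om W)) := univ.image (fun α => AA α e)
      have hQ : ∀ B ∈ Q, ∃ α, AA α e = B := fun B hB => by
        obtain ⟨α, _, h⟩ := Finset.mem_image.1 hB
        exact ⟨α, h⟩
      have hE'm : MeasurableSet (E' e) := sig_le _ _ (measurableSet_of_alg (hE' e))
      have hsub : E e \ {ω | ∀ α, ω ∈ AA α e → ω ∈ G' α e} ⊆
          (⋃ α ∈ (univ : Finset (K → Prop)), core μ k c (E e) e (AA α e) \ G' α e) ∪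
          (symmDiff (E e) (E' e) ∪ ⋃ B ∈ Q, B ∩ ((core μ k c (E e) e B)ᶜ ∩ E' e)) := by
        rintro ω ⟨hωE, hω⟩
        simp only [Set.mem_ofPred_eq, not_forall] at hω
        obtain ⟨α, hα, hG⟩ := hω
        by_cases hcr : ω ∈ core μ k c (E e) e (AA α e)
        · exact Or.inl (Set.mem_iUnion₂.2 ⟨α, Finset.mem_univ _, hcr, hG⟩)
        by_cases hE' : ω ∈ E' e
        · exact Or.inr (Or.inr (Set.mem_iUnion₂.2
            ⟨AA α e, Finset.mem_image_of_mem _ (Finset.mem_univ _), hα, hcr, hE'⟩))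
        · exact Or.inr (Or.inl (Or.inl ⟨hωE, hE'⟩))
      have b1 : μ.real (⋃ α ∈ (univ : Finset (K → Prop)), core μ k c (E e) e (AA α e) \ G' α e)
          ≤ ε / 2 := by
        refine (measureReal_biUnion_finset_le _ _).trans
          ((Finset.sum_le_sum fun α _ => hG'm α e he).trans_eq ?_)
        rw [Finset.sum_const, nsmul_eq_mul, Finset.card_univ, ← hN]
        field_simp
      have b2 : μ.real (⋃ B ∈ Q, B ∩ ((core μ k c (E e) e B)ᶜ ∩ E' e)) ≤ c⁻¹ * η := by
        refine (measureReal_biUnion_finset_le _ _).trans ?_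
        have h1 : ∀ B ∈ Q, μ.real (B ∩ ((core μ k c (E e) e B)ᶜ ∩ E' e)) ≤
            c⁻¹ * μ.real (B ∩ (E' e \ E e)) := by
          intro B hB
          obtain ⟨α, rfl⟩ := hQ B hB
          obtain ⟨G, hGm, hG⟩ := hG α
          have h2 := off_core (μ := μ) hc (hAAm α e) (hEm e) hGm
          have h3 : ∀ ω ∈ AA α e, (ω ∈ G ↔ ω ∈ E' e) := fun ω hω => by
            have := Set.ext_iff.1 hG ω
            simpa [hω] using this
          have e1 : AA α e ∩ ((core μ k c (E e) e (AA α e))ᶜ ∩ G) =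
              AA α e ∩ ((core μ k c (E e) e (AA α e))ᶜ ∩ E' e) := by
            ext ω
            refine and_congr_right fun hω => and_congr_right fun _ => h3 ω hω
          have e2 : AA α e ∩ (G \ E e) = AA α e ∩ (E' e \ E e) := by
            ext ω
            refine and_congr_right fun hω => and_congr_left fun _ => h3 ω hω
          rwa [e1, e2] at h2
        refine (Finset.sum_le_sum h1).trans ?_
        rw [← Finset.mul_sum]
        refine mul_le_mul_of_nonneg_left ?_ (by positivity)
        refine (sum_inter_le (hE'm.diff (hEm e)) Q ?_ ?_).trans ?_
        · intro B hB
          obtain ⟨α, rfl⟩ := hQ B hB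
          exact hAAm α e
        · intro B hB B' hB' hne
          obtain ⟨α, rfl⟩ := hQ B hB
          obtain ⟨β, rfl⟩ := hQ B' hB'
          refine Set.eq_empty_of_subset_empty fun ω hω => hne ?_
          ext ω'
          refine forall_congr' fun i => forall_congr' fun hi => ?_
          rw [← hω.1 i hi, ← hω.2 i hi]
        · exact (measureReal_mono fun ω hω => Or.inr hω).trans (hEE' e).le
      have hsum : η + c⁻¹ * η = ε / 2 := by
        rw [hη]
        field_simp
      have h1 := (measureReal_mono hsub (μ := μ)).trans (measureReal_union_le _ _)
      have h2 := measureReal_union_le (μ := μ) (symmDiff (E e) (E' e))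
        (⋃ B ∈ Q, B ∩ ((core μ k c (E e) e B)ᶜ ∩ E' e))
      have h3 := (hEE' e).le
      linarith

end Limit

/-! ### Transfer to finite hypergraph systems -/

section Transfer

set_option linter.unusedSectionVars false

/-- An arbitrary extension of a tuple indexed by `e` to all of `J`. -/
noncomputable def extend [∀ j, Nonempty (V j)] (e : Finset J) (z : (i : ↥e) → V i) :
    (j : J) → V j :=
  fun j => if h : j ∈ e then z ⟨j, h⟩ else Classical.arbitrary _

lemma restr_extend [∀ j, Nonempty (V j)] (e : Finset J) (z : (i : ↥e) → V i) :
    restr e (extend e z) = z := by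
  funext i
  simp [restr, extend]

lemma extend_restr [∀ j, Nonempty (V j)] (e : Finset J) (x : (j : J) → V j) :
    ∀ j ∈ e, extend e (restr e x) j = x j := by
  intro j hj
  simp [restr, extend, hj]

lemma avg_mono {α : Type} [Fintype α] {f g : α → ℝ} (h : ∀ x, f x ≤ g x) : avg f ≤ avg g :=
  div_le_div_of_nonneg_right (Finset.sum_le_sum fun x _ => h x) (Nat.cast_nonneg _)

lemma avg_indicator {α : Type} [Fintype α] (D : Set α) :
    avg (D.indicator (fun _ => (1 : ℝ))) = (D.ncard : ℝ) / Nat.card α := by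
  classical
  rw [avg, Nat.card_eq_fintype_card, Set.ncard_eq_toFinset_card']
  congr 1
  simp only [Set.indicator_apply, Finset.sum_boole]
  congr 2
  ext x
  simp

lemma avg_const_add {α : Type} [Fintype α] [Nonempty α] (c : ℝ) (f : α → ℝ) :
    avg (fun x => c + f x) = c + avg f := by
  have : (Fintype.card α : ℝ) ≠ 0 := by exact_mod_cast Fintype.card_ne_zero
  rw [avg, avg, Finset.sum_add_distrib, add_div]
  congr 1
  simp only [Finset.sum_const, Finset.card_univ, nsmul_eq_mul]
  field_simp

lemma avg_restr [∀ j, Fintype (V j)] [∀ j, Nonempty (V j)] (e : Finset J)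
    (h : ((i : ↥e) → V i) → ℝ) : avg (fun x : (j : J) → V j => h (restr e x)) = avg h := by
  let φ := Equiv.piEquivPiSubtypeProd (fun j => j ∈ e) V
  have h1 : ∑ x : (j : J) → V j, h (restr e x) =
      ∑ p : ((i : {j // j ∈ e}) → V i) × ((i : {j // ¬ j ∈ e}) → V i), h p.1 :=
    Fintype.sum_equiv φ _ _ fun x => rfl
  have h2 : Fintype.card ((j : J) → V j) = Fintype.card ((i : {j // j ∈ e}) → V i) *
      Fintype.card ((i : {j // ¬ j ∈ e}) → V i) := by
    rw [Fintype.card_congr φ, Fintype.card_prod]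
  have h3 : (Fintype.card ((i : {j // ¬ j ∈ e}) → V i) : ℝ) ≠ 0 := by
    exact_mod_cast Fintype.card_ne_zero
  rw [avg, avg, h1, h2, Fintype.sum_prod_type, Nat.cast_mul]
  simp only [Finset.sum_const, Finset.card_univ, nsmul_eq_mul, ← Finset.mul_sum]
  rw [mul_comm, mul_div_mul_right _ _ h3]

lemma isCliqueSet_empty {e : Finset J} (he : e.Nonempty) :
    IsCliqueSet e (∅ : Set ((i : ↥e) → V i)) := by
  obtain ⟨j, hj⟩ := he
  exact ⟨fun _ => ∅, fun x => ⟨fun h => h.elim, fun h => h j hj⟩⟩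

lemma complexityLE_of_fintype {e : Finset J} (he : e.Nonempty) {ι : Type} [Fintype ι]
    (P : ι → Set ((i : ↥e) → V i)) (hP : ∀ i, IsCliqueSet e (P i))
    (hd : ∀ i i', i ≠ i' → P i ∩ P i' = ∅) {T : ℕ} (hT : Fintype.card ι ≤ T) :
    ComplexityLE e (⋃ i, P i) T := by
  let φ := Fintype.equivFin ι
  refine ⟨fun t => if h : t.1 < Fintype.card ι then P (φ.symm ⟨t.1, h⟩) else ∅, ?_, ?_, ?_⟩
  · intro t
    dsimp only
    split_ifs
    · exact hP _
    · exact isCliqueSet_empty he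
  · intro t t' hne
    dsimp only
    split_ifs
    · refine hd _ _ fun h => hne ?_
      have := φ.symm.injective h
      simp only [Fin.mk.injEq] at this
      exact Fin.ext this
    all_goals simp
  · ext x
    simp only [Set.mem_iUnion]
    constructor
    · rintro ⟨t, ht⟩
      split_ifs at ht with h
      · exact ⟨_, ht⟩
      · exact ht.elim
    · rintro ⟨i, hi⟩
      refine ⟨⟨(φ i).1, (φ i).2.trans_le hT⟩, ?_⟩
      simp [hi]

lemma ComplexityLE.mono {e : Finset J} (he : e.Nonempty) {E : Set ((i : ↥e) → V i)} {T T' : ℕ}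
    (h : ComplexityLE e E T) (hT : T ≤ T') : ComplexityLE e E T' := by
  obtain ⟨P, h1, h2, rfl⟩ := h
  exact complexityLE_of_fintype he P h1 h2 (by simpa using hT)

/-- A Boolean combination of sets, each determined by fewer than `|e|` coordinates in `e`, has
bounded complexity: its atoms are clique sets. -/
lemma complexityLE_bool [∀ j, Nonempty (V j)] {e : Finset J} (he : e.Nonempty) {I : Type}
    [Fintype I] [DecidableEq I] (S : I → Set ((j : J) → V j)) (f : I → Finset J)
    (hf : ∀ i, f i ⊆ e) (hf' : ∀ i, (f i).card < e.card)
    (hS : ∀ i x y, (∀ j ∈ f i, x j = y j) → x ∈ S i → y ∈ S i) (Ψ : (I → Prop) → Prop) {T : ℕ}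
    (hT : Fintype.card (I → Prop) ≤ T) :
    ComplexityLE e {z | Ψ (fun i => extend e z ∈ S i)} T := by
  have hex : ∀ i, ∃ j ∈ e, f i ⊆ e.erase j := by
    intro i
    obtain ⟨j, hj, hj'⟩ := Finset.exists_mem_notMem_of_card_lt_card (hf' i)
    refine ⟨j, hj, fun l hl => Finset.mem_erase.2 ⟨?_, hf i hl⟩⟩
    rintro rfl
    exact hj' hl
  choose c hc hfc using hex
  have hface : ∀ i (z : (i : ↥e) → V i),
      extend (e.erase (c i)) (faceProj (c i) z) ∈ S i ↔ extend e z ∈ S i := by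
    intro i z
    have : ∀ j ∈ f i, extend (e.erase (c i)) (faceProj (c i) z) j = extend e z j := by
      intro j hj
      have h1 := hfc i hj
      have h2 := hf i hj
      rw [extend, extend, dif_pos h1, dif_pos h2]
      rfl
    exact ⟨hS i _ _ this, hS i _ _ fun j hj => (this j hj).symm⟩
  have hU : {z | Ψ (fun i => extend e z ∈ S i)} =
      ⋃ q : I → Prop, {z | Ψ q ∧ ∀ i, extend e z ∈ S i ↔ q i} := by
    ext z
    simp only [Set.mem_ofPred_eq, Set.mem_iUnion]
    constructor
    · exact fun h => ⟨_, h, fun i => Iff.rfl⟩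
    · rintro ⟨q, hq, h⟩
      have : (fun i => extend e z ∈ S i) = q := funext fun i => propext (h i)
      rwa [this]
  rw [hU]
  refine complexityLE_of_fintype he _ (fun q => ?_) (fun q q' hne => ?_) hT
  · refine ⟨fun j => {y | Ψ q ∧ ∀ i, c i = j → (extend (e.erase j) y ∈ S i ↔ q i)}, fun z => ?_⟩
    constructor
    · rintro ⟨h1, h2⟩ j hj
      refine ⟨h1, ?_⟩
      rintro i rfl
      rw [hface]
      exact h2 i
    · intro h
      obtain ⟨j, hj⟩ := he
      refine ⟨(h j hj).1, fun i => ?_⟩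
      rw [← hface]
      exact (h (c i) (hc i)).2 i rfl
  · refine Set.eq_empty_of_subset_empty ?_
    rintro z ⟨⟨_, h⟩, _, h'⟩
    exact hne (funext fun i => propext ((h i).symm.trans (h' i)))

/-- The conclusion of the removal lemma for `(V, H, g)`, with error `ε` and complexity `T`. -/
def Concl [∀ j, Fintype (V j)] (ε : ℝ) (T : ℕ) (H : Finset (Finset J))
    (g : (e : Finset J) → ((i : ↥e) → V i) → ℝ) : Prop :=
  ∃ E' : (e : Finset J) → Set ((i : ↥e) → V i),
    (∀ e ∈ H, ComplexityLE e (E' e)ᶜ T) ∧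
    (∀ x : (j : J) → V j,
      ∏ e ∈ H, Set.indicator (E' e) (fun _ => (1 : ℝ)) (restr e x) = 0) ∧
    (∀ e ∈ H, avg (fun x : (i : ↥e) → V i =>
      g e x * Set.indicator (E' e)ᶜ (fun _ => (1 : ℝ)) x) ≤ ε)

/-- In a sequence of weighted hypergraphs with edge counts tending to zero, some member satisfies
the conclusion of the removal lemma. -/
lemma transfer {ε : ℝ} (hε : 0 < ε) (H : Finset (Finset J)) (k : ℕ)
    (hH : ∀ e ∈ H, e.card = k + 1) (W : ℕ → J → Type) [∀ n j, Fintype (W n j)]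
    [∀ n j, Nonempty (W n j)] (g : ∀ n, (e : Finset J) → ((i : ↥e) → W n i) → ℝ)
    (hg : ∀ n, ∀ e ∈ H, ∀ x, 0 ≤ g n e x ∧ g n e x ≤ 1)
    (havg : ∀ n, avg (fun x : (j : J) → W n j => ∏ e ∈ H, g n e (restr e x)) ≤ 1 / ((n : ℝ) + 1)) :
    ∃ n, Concl ε (n + 1) H (g n) := by
  classical
  obtain ⟨μ, hμp, hμ⟩ := exists_loeb (fun n => (j : J) → W n j)
  replace hμ : IsLoeb μ := hμ
  have hU : (hyperfilter ℕ : Filter ℕ) ≤ atTop := Nat.hyperfilter_le_atTop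
  -- the edges of the limit hypergraph
  let S : Finset J → ∀ n, Set ((j : J) → W n j) := fun e n => {x | ε / 2 ≤ g n e (restr e x)}
  have hSdep : ∀ e, Dep e (S e) := by
    intro e n x y hxy hx
    have : restr e y = restr e x := funext fun i => (hxy i i.2).symm
    simpa only [S, Set.mem_ofPred_eq, this] using hx
  have hSm : ∀ e, MeasurableSet[sig W {e}] (IntSet (S e)) := fun e =>
    MeasurableSpace.measurableSet_generateFrom ⟨e, rfl, S e, hSdep e, rfl⟩
  have hinter : ∀ A : Finset J → ∀ n, Set ((j : J) → W n j),
      (⋂ e ∈ H, (IntSet (A e) : Set (Om W))) = IntSet (fun n => ⋂ e ∈ H, A e n) := by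
    intro A
    have := intSet_bool A (fun p => ∀ e ∈ H, p e)
    convert this using 1
    · ext ω; simp
    · congr 1
      funext n
      ext x
      simp
  have hnull : μ (Set.univ ∩ ⋂ e ∈ H, IntSet (S e)) = 0 := by
    rw [Set.univ_inter, hinter, ← measureReal_eq_zero_iff]
    refine le_antisymm ?_ measureReal_nonneg
    have hlim : Tendsto (fun n : ℕ => ((ε / 2) ^ H.card)⁻¹ * (1 / ((n : ℝ) + 1)))
        (hyperfilter ℕ : Filter ℕ) (𝓝 0) := by
      have := (tendsto_one_div_add_atTop_nhds_zero_nat (𝕜 := ℝ)).const_mul ((ε / 2) ^ H.card)⁻¹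
      rw [mul_zero] at this
      exact this.mono_left hU
    refine le_of_tendsto_of_tendsto (hμ _) hlim (Eventually.of_forall fun n => ?_)
    dsimp only
    rw [← avg_indicator, inv_mul_eq_div, le_div_iff₀ (by positivity)]
    refine le_trans ?_ (havg n)
    rw [avg, avg, div_mul_eq_mul_div]
    refine div_le_div_of_nonneg_right ?_ (Nat.cast_nonneg _)
    rw [Finset.sum_mul]
    refine Finset.sum_le_sum fun x _ => ?_
    by_cases hx : x ∈ ⋂ e ∈ H, S e n
    · rw [Set.indicator_of_mem hx, one_mul, ← Finset.prod_const]
      exact Finset.prod_le_prod (fun _ _ => by positivity) fun e he => Set.mem_iInter₂.1 hx e he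
    · rw [Set.indicator_of_notMem hx, zero_mul]
      exact Finset.prod_nonneg fun e he => (hg n e he _).1
  have hpeel := peel hμ (fun e => IntSet (S e)) H hH (fun e _ => hSm e) Set.univ
    (@MeasurableSet.univ _ (sig W _)) hnull
  rw [Set.univ_inter] at hpeel
  obtain ⟨F, hF, hFe, hFm⟩ := removal_limit hμ k H _ (fun e => measurable_pos _ _) hpeel
    (ε / 4) (by positivity)
  have hSF : ∀ e ∈ H, μ.real (IntSet (S e) \ F e) ≤ ε / 4 := by
    intro e he
    set P := {ω | 0 < cprob μ (low e k) (IntSet (S e)) ω} with hP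
    have hPm : MeasurableSet[sig W (low e k)] Pᶜ :=
      @MeasurableSet.compl _ _ (sig W (low e k)) (measurable_pos _ _)
    have i1 := ci_self (μ := μ) (measurableSet_intSet (S e)) hPm
    have i2 : ∫ ω in Pᶜ, cprob μ (low e k) (IntSet (S e)) ω ∂μ ≤ 0 :=
      setIntegral_nonpos (sig_le _ _ hPm) fun ω hω => not_lt.1 hω
    have i3 : IntSet (S e) \ F e ⊆ (IntSet (S e) ∩ Pᶜ) ∪ (P \ F e) := by
      rintro ω ⟨a, b⟩
      by_cases h : ω ∈ P
      · exact Or.inr ⟨h, b⟩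
      · exact Or.inl ⟨a, h⟩
    have i4 := (measureReal_mono i3 (μ := μ)).trans (measureReal_union_le _ _)
    have i5 := hFm e he
    linarith
  choose I hI R f Φ hf hR hEq using fun e => alg_normal (hF e)
  have hI' : ∀ e, Nonempty (Fintype (I e)) := fun e => nonempty_fintype _
  let _ : ∀ e, Fintype (I e) := fun e => (hI' e).some
  let Fn : Finset J → ∀ n, Set ((j : J) → W n j) := fun e n => {x | Φ e (fun i => x ∈ R e i n)}
  have hFn : ∀ e, F e = IntSet (Fn e) := fun e => (hEq e).trans (intSet_bool (R e) (Φ e))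
  have ev1 : ∀ᶠ n in (hyperfilter ℕ : Filter ℕ), ⋂ e ∈ H, Fn e n = ∅ := by
    refine intSet_eq_empty ?_
    rw [← hinter, ← hFe]
    simp only [hFn]
  have ev2 : ∀ᶠ n in (hyperfilter ℕ : Filter ℕ), ∀ e : H,
      ((S e n \ Fn e n).ncard : ℝ) / Nat.card ((j : J) → W n j) < ε / 2 := by
    refine Filter.eventually_all.2 fun e => ?_
    have h1 := hμ (fun n => S e n \ Fn e n)
    have h2 : IntSet (fun n => S e n \ Fn e n) = IntSet (S e) \ F e := by
      rw [hFn, Set.sdiff_eq, intSet_compl, intSet_inter]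
      rfl
    rw [h2] at h1
    exact h1.eventually_lt_const (by linarith [hSF e e.2])
  have ev3 : ∀ᶠ n in (hyperfilter ℕ : Filter ℕ), ∀ e, Fintype.card (I e → Prop) ≤ n :=
    Filter.eventually_all.2 fun e => hU (eventually_ge_atTop _)
  obtain ⟨n, h1, h2, h3⟩ := (ev1.and (ev2.and ev3)).exists
  have hFdep : ∀ e, ∀ x y : (j : J) → W n j, (∀ j ∈ e, x j = y j) → x ∈ Fn e n → y ∈ Fn e n := by
    intro e
    exact Dep.bool (fun i => fun m x y hxy => hR e i m x y fun j hj => hxy j ((hf e i).1 hj))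
      (Φ e) n
  have hmem : ∀ e (x : (j : J) → W n j), extend e (restr e x) ∈ Fn e n ↔ x ∈ Fn e n := fun e x =>
    ⟨hFdep e _ _ (extend_restr e x), hFdep e _ _ fun j hj => (extend_restr e x j hj).symm⟩
  refine ⟨n, fun e => {z | extend e z ∈ Fn e n}, fun e he => ?_, fun x => ?_, fun e he => ?_⟩
  · have hne : e.Nonempty := Finset.card_pos.1 (by rw [hH e he]; omega)
    refine complexityLE_bool hne (fun i => R e i n) (f e) (fun i => (hf e i).1) (fun i => ?_)
      (fun i => hR e i n) (fun p => ¬ Φ e p) ((h3 e).trans (Nat.le_succ n))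
    have := (hf e i).2
    rw [hH e he]
    omega
  · have hx : x ∉ ⋂ e ∈ H, Fn e n := by rw [h1]; exact fun h => h
    rw [Set.mem_iInter₂] at hx
    push Not at hx
    obtain ⟨e, he, hx⟩ := hx
    refine Finset.prod_eq_zero he (Set.indicator_of_notMem ?_ _)
    rw [← hmem] at hx
    exact hx
  · rw [← avg_restr]
    have hb : ∀ x : (j : J) → W n j, g n e (restr e x) *
        Set.indicator {z | extend e z ∈ Fn e n}ᶜ (fun _ => (1 : ℝ)) (restr e x) ≤
        ε / 2 + (S e n \ Fn e n).indicator (fun _ => (1 : ℝ)) x := by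
      intro x
      have hi : 0 ≤ (S e n \ Fn e n).indicator (fun _ => (1 : ℝ)) x :=
        Set.indicator_nonneg (fun _ _ => zero_le_one) x
      by_cases hxF : x ∈ Fn e n
      · rw [Set.indicator_of_notMem (by simpa [hmem] using hxF)]
        linarith
      · rw [Set.indicator_of_mem (by simpa [hmem] using hxF), mul_one]
        by_cases hxS : x ∈ S e n
        · rw [Set.indicator_of_mem (show x ∈ S e n \ Fn e n from ⟨hxS, hxF⟩)]
          linarith [(hg n e he (restr e x)).2]
        · have : g n e (restr e x) < ε / 2 := not_le.1 hxS
          linarith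
    refine (avg_mono hb).trans ?_
    rw [avg_const_add, avg_indicator]
    linarith [h2 ⟨e, he⟩]

lemma removal_fixed {ε : ℝ} (hε : 0 < ε) (H : Finset (Finset J)) : ∃ N : ℕ,
    ∀ (V : J → Type) [∀ j, Fintype (V j)] [∀ j, Nonempty (V j)] (r : ℕ), 1 ≤ r →
      (∀ e ∈ H, e.card = r) → ∀ g : (e : Finset J) → ((i : ↥e) → V i) → ℝ,
      (∀ e ∈ H, ∀ x, 0 ≤ g e x ∧ g e x ≤ 1) →
      avg (fun x : (j : J) → V j => ∏ e ∈ H, g e (restr e x)) ≤ 1 / ((N : ℝ) + 1) →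
      Concl ε (N + 1) H g := by
  by_cases hr : ∃ k, ∀ e ∈ H, e.card = k + 1
  · obtain ⟨k, hk⟩ := hr
    by_contra! hc
    choose W i1 i2 r _ _ g hg havg hno using hc
    obtain ⟨n, hn⟩ := transfer hε H k hk W g hg havg
    exact hno n hn
  · refine ⟨0, fun V _ _ r hr' hH => (hr ⟨r - 1, fun e he => ?_⟩).elim⟩
    rw [hH e he]
    omega

end Transfer

end HyperRemoval

/-- **Weighted hypergraph removal lemma.** For every `ε > 0` and finite `J` there exist
`δ > 0` and `T > 0` such that: for every hypergraph system `(J, (V_j), r, H)` and every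
weighted hypergraph `g` with `0 ≤ g ≤ 1` and `E[∏_{e ∈ H} g_e(x_e)] ≤ δ`, there are sets
`E'_e ⊆ V_e` whose complements have complexity at most `T`, with
`∏_{e ∈ H} 1_{E'_e}(x_e) = 0` for all `x ∈ V_J` and
`E[g_e · 1_{V_e ∖ E'_e}] ≤ ε` for all `e ∈ H`. -/
theorem dense_hypergraph_removal (ε : ℝ) (hε : 0 < ε)
    (J : Type) [Fintype J] [DecidableEq J] :
    ∃ δ : ℝ, 0 < δ ∧ ∃ T : ℕ, 0 < T ∧
    ∀ (V : J → Type) [∀ j, Fintype (V j)] [∀ j, Nonempty (V j)]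
      (r : ℕ), 1 ≤ r → ∀ H : Finset (Finset J), (∀ e ∈ H, e.card = r) →
      ∀ g : (e : Finset J) → ((i : ↥e) → V i) → ℝ,
      (∀ e ∈ H, ∀ x, 0 ≤ g e x ∧ g e x ≤ 1) →
      avg (fun x : (j : J) → V j => ∏ e ∈ H, g e (restr e x)) ≤ δ →
      ∃ E' : (e : Finset J) → Set ((i : ↥e) → V i),
        (∀ e ∈ H, ComplexityLE e (E' e)ᶜ T) ∧
        (∀ x : (j : J) → V j,
          ∏ e ∈ H, Set.indicator (E' e) (fun _ => (1 : ℝ)) (restr e x) = 0) ∧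
        (∀ e ∈ H, avg (fun x : (i : ↥e) → V i =>
          g e x * Set.indicator (E' e)ᶜ (fun _ => (1 : ℝ)) x) ≤ ε) := by
  classical
  choose N hN using fun H : Finset (Finset J) => HyperRemoval.removal_fixed hε H
  -- one threshold for the finitely many edge sets `H`
  let M := ∑ H, N H
  have hM : ∀ H, N H ≤ M := fun H =>
    Finset.single_le_sum (f := N) (fun _ _ => Nat.zero_le _) (Finset.mem_univ H)
  refine ⟨1 / ((M : ℝ) + 1), by positivity, M + 1, Nat.succ_pos M, ?_⟩
  intro V _ _ r hr H hH g hg havg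
  have hle : 1 / ((M : ℝ) + 1) ≤ 1 / ((N H : ℝ) + 1) := by
    have : (N H : ℝ) ≤ M := by exact_mod_cast hM H
    gcongr
  obtain ⟨E', h1, h2, h3⟩ := hN H V r hr hH g hg (havg.trans hle)
  refine ⟨E', fun e he => ?_, h2, h3⟩
  exact HyperRemoval.ComplexityLE.mono (Finset.card_pos.1 (by rw [hH e he]; omega)) (h1 e he)
    (Nat.succ_le_succ (hM H))
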